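/- Broken replica bound for the ground state: for every N ≥ 1, h ∈ ℝ, and every zero-temperature order parameter x̄ (piecewise constant with values 0 ≤ m̄_1 ≤ … ≤ m̄_K), the quenched ground state energy density of the SK model satisfies e_N(h) ≤ α̃(h;x̄) := f̄(0,h;x̄) − (1/2) ∫₀¹ q x̄(q) dq; consequently e_N(h) ≤ inf_{x̄} α̃(h;x̄), uniformly in N. -/

import Mathlib

open MeasureTheory ProbabilityTheory Filter

noncomputable section

/-! ## Gaussian disorder -/

/-- The standard (centered, unit variance) Gaussian measure on `ℝ`. -/
def stdGauss : Measure ℝ := gaussianReal 0 1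

instance : IsProbabilityMeasure stdGauss := by unfold stdGauss; infer_instance

/-- `N` i.i.d. standard Gaussian variables. -/
def gaussN (N : ℕ) : Measure (Fin N → ℝ) := Measure.pi fun _ => stdGauss

instance (N : ℕ) : IsProbabilityMeasure (gaussN N) := by unfold gaussN; infer_instance

/-- The i.i.d. standard Gaussian couplings `J_{ij}` (only entries with `i < j` are used). -/
def gaussC (N : ℕ) : Measure (Fin N → Fin N → ℝ) := Measure.pi fun _ => gaussN N

instance (N : ℕ) : IsProbabilityMeasure (gaussC N) := by unfold gaussC; infer_instance

/-- The i.i.d. standard Gaussian one-body fields `J_i^a`, `a = 1, …, K`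
(row `⟨a-1⟩ : Fin K` corresponds to the level `a` of the paper). -/
def gaussS (K N : ℕ) : Measure (Fin K → Fin N → ℝ) := Measure.pi fun _ => gaussN N

instance (K N : ℕ) : IsProbabilityMeasure (gaussS K N) := by unfold gaussS; infer_instance

/-- I.i.d. standard Gaussian couplings indexed by subsets of sites, for the p-spin model
(only the cardinality-`p` subsets are used). -/
def gaussP (N : ℕ) : Measure (Finset (Fin N) → ℝ) := Measure.pi fun _ => stdGauss

instance (N : ℕ) : IsProbabilityMeasure (gaussP N) := by unfold gaussP; infer_instance

/-! ## Spins and overlaps -/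

/-- The spin value (`±1`) of a Boolean configuration entry. -/
def spin (b : Bool) : ℝ := if b then 1 else -1

/-- The overlap `q₁₂ = N⁻¹ ∑ᵢ σᵢ⁽¹⁾ σᵢ⁽²⁾` of two replicas. -/
def overlap (N : ℕ) (σ τ : Fin N → Bool) : ℝ := (N : ℝ)⁻¹ * ∑ i, spin (σ i) * spin (τ i)

/-! ## Piecewise constant functional order parameters and the Parisi function -/

/-- One backward step of the Parisi recursion on an interval of constancy of the
functional order parameter: from `g = f(q_a, ·)`, with value `m` of the order parameter
and `s = q_a - q`, produce `f(q, ·)`. -/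
def pStep (m s : ℝ) (g : ℝ → ℝ) (y : ℝ) : ℝ :=
  if m = 0 then ∫ z, g (y + z * Real.sqrt s) ∂stdGauss
  else m⁻¹ * Real.log (∫ z, Real.exp (m * g (y + z * Real.sqrt s)) ∂stdGauss)

/-- `parisiLevel K q m β j` is the Parisi function `f(q_{K-j}, ·; x, β)` at the node
`q_{K-j}`, obtained by `j` backward steps from the final condition `f(q_K, y) = log cosh (β y)`. -/
def parisiLevel (K : ℕ) (q m : ℕ → ℝ) (β : ℝ) : ℕ → ℝ → ℝ
  | 0 => fun y => Real.log (Real.cosh (β * y))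
  | j + 1 => pStep (m (K - j)) (q (K - j) - q (K - j - 1)) (parisiLevel K q m β j)

/-- The Parisi function `f(r, y; x, β)` for a piecewise constant order parameter `x`
given by nodes `q` and values `m`:  for `q_{a-1} ≤ r ≤ q_a` it is obtained from
`f(q_a, ·)` by one backward step with value `m_a` over a time `q_a - r`. -/
def parisiF (K : ℕ) (q m : ℕ → ℝ) (β : ℝ) (r y : ℝ) : ℝ :=
  pStep (m (sInf {a : ℕ | r ≤ q a})) (q (sInf {a : ℕ | r ≤ q a}) - r)
    (parisiLevel K q m β (K - sInf {a : ℕ | r ≤ q a})) y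

/-- The functional order parameter as a function: `x(r) = m_a` for `q_{a-1} ≤ r < q_a`,
and `x(1) = m_K`. -/
def xFun (K : ℕ) (q m : ℕ → ℝ) (r : ℝ) : ℝ :=
  if 1 ≤ r then m K else m (sInf {a : ℕ | r < q a})

/-- A piecewise constant functional order parameter:
`0 = q_0 ≤ q_1 ≤ … ≤ q_K = 1`, `0 ≤ m_1 ≤ … ≤ m_K ≤ 1`,
with the conventions `m_0 = 0`, `m_{K+1} = 1`. -/
structure OrderParam where
  K : ℕ
  hK : 1 ≤ K
  q : ℕ → ℝ
  m : ℕ → ℝ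
  hq0 : q 0 = 0
  hqK : q K = 1
  hq_mono : ∀ a, a < K → q a ≤ q (a + 1)
  hm0 : m 0 = 0
  hmtop : m (K + 1) = 1
  hm1 : 0 ≤ m 1
  hm_mono : ∀ a, 1 ≤ a → a < K → m a ≤ m (a + 1)
  hmK : m K ≤ 1

/-- Guerra's trial function `ᾱ(β, h; x) = log 2 + f(0, h; x, β) - (β²/2) ∫₀¹ r x(r) dr`. -/
def trialAlpha (K : ℕ) (q m : ℕ → ℝ) (β h : ℝ) : ℝ :=
  Real.log 2 + parisiLevel K q m β K h - β ^ 2 / 2 * ∫ r in (0 : ℝ)..1, r * xFun K q m r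

/-! ## The Sherrington–Kirkpatrick model -/

/-- The SK Hamiltonian `H_N(σ, h, J) = -(1/√N) ∑_{i<j} J_{ij} σ_i σ_j - h ∑_i σ_i`. -/
def hamSK (N : ℕ) (h : ℝ) (Jc : Fin N → Fin N → ℝ) (σ : Fin N → Bool) : ℝ :=
  -(1 / Real.sqrt N) * ∑ i, ∑ j, (if i < j then Jc i j * spin (σ i) * spin (σ j) else 0)
    - h * ∑ i, spin (σ i)

/-- The SK partition function `Z_N(β, h, J)`. -/
def ZSK (N : ℕ) (β h : ℝ) (Jc : Fin N → Fin N → ℝ) : ℝ :=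
  ∑ σ : Fin N → Bool, Real.exp (-(β * hamSK N h Jc σ))

/-- The quenched average `N⁻¹ E log Z_N(β, h, J)`. -/
def quenchedFE (N : ℕ) (β h : ℝ) : ℝ :=
  (N : ℝ)⁻¹ * ∫ Jc, Real.log (ZSK N β h Jc) ∂gaussC N

/-- The ground state energy density `e_N(J, h)`, defined by
`-e_N(J, h) = N⁻¹ min_σ H_N(σ, h, J)`. -/
def eGS (N : ℕ) (h : ℝ) (Jc : Fin N → Fin N → ℝ) : ℝ :=
  -((N : ℝ)⁻¹ * ⨅ σ : Fin N → Bool, hamSK N h Jc σ)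

/-- The quenched ground state energy density `e_N(h) = E(e_N(J, h))`. -/
def eQuenched (N : ℕ) (h : ℝ) : ℝ := ∫ Jc, eGS N h Jc ∂gaussC N

/-! ## The interpolating system -/

/-- The interpolating Boltzmann factor. -/
def bFac (N K : ℕ) (β h t : ℝ) (q : ℕ → ℝ) (Jc : Fin N → Fin N → ℝ)
    (Js : Fin K → Fin N → ℝ) (σ : Fin N → Bool) : ℝ :=
  Real.exp (β * Real.sqrt (t / N) *
        ∑ i, ∑ j, (if i < j then Jc i j * spin (σ i) * spin (σ j) else 0)
      + β * h * ∑ i, spin (σ i)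
      + β * Real.sqrt (1 - t) *
          ∑ a : Fin K, Real.sqrt (q (a.val + 1) - q a.val) * ∑ i, Js a i * spin (σ i))

/-- The interpolating partition function `Z̃_N(β, h; t; x; J)`. -/
def Ztil (N K : ℕ) (β h t : ℝ) (q : ℕ → ℝ) (Jc : Fin N → Fin N → ℝ)
    (Js : Fin K → Fin N → ℝ) : ℝ :=
  ∑ σ : Fin N → Bool, bFac N K β h t q Jc Js σ

/-- `Wrec … j` is the random variable `Z_{K-j}`:  `Z_K = Z̃_N` and
`Z_{a-1} = (E_a (Z_a^{m_a}))^{1/m_a}`, where `E_a` integrates the Gaussian row `J^a`. -/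
def Wrec (N K : ℕ) (β h t : ℝ) (q m : ℕ → ℝ) :
    ℕ → (Fin N → Fin N → ℝ) → (Fin K → Fin N → ℝ) → ℝ
  | 0 => Ztil N K β h t q
  | j + 1 => fun Jc Js =>
      if hj : j < K then
        (∫ g : Fin N → ℝ,
            (Wrec N K β h t q m j Jc (Function.update Js ⟨K - 1 - j, by omega⟩ g)) ^ m (K - j)
          ∂gaussN N) ^ (m (K - j))⁻¹
      else Wrec N K β h t q m j Jc Js

/-- `Zrec … a` is the random variable `Z_a` of the broken replica interpolation. -/
def Zrec (N K : ℕ) (β h t : ℝ) (q m : ℕ → ℝ) (a : ℕ) :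
    (Fin N → Fin N → ℝ) → (Fin K → Fin N → ℝ) → ℝ :=
  Wrec N K β h t q m (K - a)

/-- The interpolating auxiliary function `α̃_N(t) = N⁻¹ E₀ log Z₀`. -/
def atilde (N K : ℕ) (β h : ℝ) (q m : ℕ → ℝ) (t : ℝ) : ℝ :=
  (N : ℝ)⁻¹ * ∫ Jc, Real.log (Wrec N K β h t q m K Jc 0) ∂gaussC N

/-- The normalized weight `f_a = Z_a^{m_a} / E_a(Z_a^{m_a}) = Z_a^{m_a} / Z_{a-1}^{m_a}`. -/
def fWeight (N K : ℕ) (β h t : ℝ) (q m : ℕ → ℝ) (a : ℕ) (Jc : Fin N → Fin N → ℝ)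
    (Js : Fin K → Fin N → ℝ) : ℝ :=
  Zrec N K β h t q m a Jc Js ^ m a / Zrec N K β h t q m (a - 1) Jc Js ^ m a

/-- The Gibbs expectation `ω(A)` of the interpolating Boltzmann factor. -/
def gibbs (N K : ℕ) (β h t : ℝ) (q : ℕ → ℝ) (A : (Fin N → Bool) → ℝ)
    (Jc : Fin N → Fin N → ℝ) (Js : Fin K → Fin N → ℝ) : ℝ :=
  (∑ σ : Fin N → Bool, A σ * bFac N K β h t q Jc Js σ) / Ztil N K β h t q Jc Js

/-- The two-replica Gibbs product expectation `Ω(A)`. -/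
def gibbs2 (N K : ℕ) (β h t : ℝ) (q : ℕ → ℝ) (A : (Fin N → Bool) → (Fin N → Bool) → ℝ)
    (Jc : Fin N → Fin N → ℝ) (Js : Fin K → Fin N → ℝ) : ℝ :=
  (∑ σ : Fin N → Bool, ∑ τ : Fin N → Bool,
      A σ τ * bFac N K β h t q Jc Js σ * bFac N K β h t q Jc Js τ) /
    Ztil N K β h t q Jc Js ^ 2

/-- `omT1 … A j` is the partially averaged state `ω̃_{K-j}(A)`:
`ω̃_K = ω` and `ω̃_{a-1}(·) = E_a (f_a ω̃_a(·))`. -/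
def omT1 (N K : ℕ) (β h t : ℝ) (q m : ℕ → ℝ) (A : (Fin N → Bool) → ℝ) :
    ℕ → (Fin N → Fin N → ℝ) → (Fin K → Fin N → ℝ) → ℝ
  | 0 => gibbs N K β h t q A
  | j + 1 => fun Jc Js =>
      if hj : j < K then
        ∫ g : Fin N → ℝ,
          fWeight N K β h t q m (K - j) Jc (Function.update Js ⟨K - 1 - j, by omega⟩ g) *
            omT1 N K β h t q m A j Jc (Function.update Js ⟨K - 1 - j, by omega⟩ g)
          ∂gaussN N
      else omT1 N K β h t q m A j Jc Js

/-- `omT2 … A j` is the partially averaged two-replica state `Ω̃_{K-j}(A)`: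
`Ω̃_K = Ω` and `Ω̃_{a-1}(·) = E_a (f_a Ω̃_a(·))`. -/
def omT2 (N K : ℕ) (β h t : ℝ) (q m : ℕ → ℝ) (A : (Fin N → Bool) → (Fin N → Bool) → ℝ) :
    ℕ → (Fin N → Fin N → ℝ) → (Fin K → Fin N → ℝ) → ℝ
  | 0 => gibbs2 N K β h t q A
  | j + 1 => fun Jc Js =>
      if hj : j < K then
        ∫ g : Fin N → ℝ,
          fWeight N K β h t q m (K - j) Jc (Function.update Js ⟨K - 1 - j, by omega⟩ g) *
            omT2 N K β h t q m A j Jc (Function.update Js ⟨K - 1 - j, by omega⟩ g)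
          ∂gaussN N
      else omT2 N K β h t q m A j Jc Js

/-- The deformed quenched average `⟨A⟩_a = E(f_1 ⋯ f_a Ω̃_a(A))` at interpolation
parameter `t`, for a function `A` of two replicas. -/
def angA (N K : ℕ) (β h t : ℝ) (q m : ℕ → ℝ) (a : ℕ)
    (A : (Fin N → Bool) → (Fin N → Bool) → ℝ) : ℝ :=
  ∫ Jc, ∫ Js,
      (∏ b ∈ Finset.Icc 1 a, fWeight N K β h t q m b Jc Js) *
        omT2 N K β h t q m A (K - a) Jc Js
    ∂gaussS K N ∂gaussC N

/-! ## Zero temperature (ground state) objects -/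

/-- The zero-temperature Parisi recursion: `parisiLevelBar K q m j` is `f̄(q_{K-j}, ·; x̄)`,
with final condition `f̄(q_K, y) = |y|`. -/
def parisiLevelBar (K : ℕ) (q m : ℕ → ℝ) : ℕ → ℝ → ℝ
  | 0 => fun y => |y|
  | j + 1 => pStep (m (K - j)) (q (K - j) - q (K - j - 1)) (parisiLevelBar K q m j)

/-- A zero-temperature piecewise constant order parameter: nodes
`0 = q_0 ≤ … ≤ q_K = 1` and nondecreasing values `0 ≤ m̄_1 ≤ … ≤ m̄_K`
(no upper bound `1`), with the convention `m̄_0 = 0`. -/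
structure ZeroTParam where
  K : ℕ
  hK : 1 ≤ K
  q : ℕ → ℝ
  m : ℕ → ℝ
  hq0 : q 0 = 0
  hqK : q K = 1
  hq_mono : ∀ a, a < K → q a ≤ q (a + 1)
  hm0 : m 0 = 0
  hm1 : 0 ≤ m 1
  hm_mono : ∀ a, 1 ≤ a → a < K → m a ≤ m (a + 1)

/-- The zero-temperature trial function `α̃(h; x̄) = f̄(0, h; x̄) - (1/2) ∫₀¹ r x̄(r) dr`. -/
def gsTrial (K : ℕ) (q m : ℕ → ℝ) (h : ℝ) : ℝ :=
  parisiLevelBar K q m K h - 1 / 2 * ∫ r in (0 : ℝ)..1, r * xFun K q m r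

/-! ## The p-spin model -/

/-- A piecewise constant functional order parameter on `[0, p/2]`:
`0 = q_0 ≤ … ≤ q_K = p/2` and `0 ≤ m_1 ≤ … ≤ m_K ≤ 1`. -/
structure POrderParam (p : ℕ) where
  K : ℕ
  hK : 1 ≤ K
  q : ℕ → ℝ
  m : ℕ → ℝ
  hq0 : q 0 = 0
  hqK : q K = p / 2
  hq_mono : ∀ a, a < K → q a ≤ q (a + 1)
  hm1 : 0 ≤ m 1
  hm_mono : ∀ a, 1 ≤ a → a < K → m a ≤ m (a + 1)
  hmK : m K ≤ 1

/-- The p-spin Hamiltonian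
`H_N(σ,h,J) = -(p!/(2N^{p-1}))^{1/2} ∑_{i_1<…<i_p} J_{i_1…i_p} σ_{i_1}⋯σ_{i_p} - h ∑_i σ_i`. -/
def hamP (p N : ℕ) (h : ℝ) (J : Finset (Fin N) → ℝ) (σ : Fin N → Bool) : ℝ :=
  -Real.sqrt ((Nat.factorial p : ℝ) / (2 * (N : ℝ) ^ (p - 1))) *
      ∑ S ∈ Finset.powersetCard p (Finset.univ : Finset (Fin N)), J S * ∏ i ∈ S, spin (σ i)
    - h * ∑ i, spin (σ i)

/-- The p-spin partition function. -/
def ZP (p N : ℕ) (β h : ℝ) (J : Finset (Fin N) → ℝ) : ℝ :=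
  ∑ σ : Fin N → Bool, Real.exp (-(β * hamP p N h J σ))

/-- The p-spin quenched average `N⁻¹ E log Z_N^{(p)}(β, h, J)`. -/
def quenchedFEP (p N : ℕ) (β h : ℝ) : ℝ :=
  (N : ℝ)⁻¹ * ∫ J, Real.log (ZP p N β h J) ∂gaussP N

/-- The functional order parameter on `[0, p/2]` as a function. -/
def xFunP (p K : ℕ) (q m : ℕ → ℝ) (r : ℝ) : ℝ :=
  if (p : ℝ) / 2 ≤ r then m K else m (sInf {a : ℕ | r < q a})

/-- The change of variables `q̄(r)` defined by `2r = p q̄^{p-1}`. -/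
def qBar (p : ℕ) (r : ℝ) : ℝ := (2 * r / p) ^ (((p : ℝ) - 1)⁻¹)

/-- The p-spin trial function
`ᾱ_p(β, h; x) = log 2 + f(0, h; x, β) - (β²/2) ∫₀^{p/2} q̄(r) x(r) dr`. -/
def trialAlphaP (p K : ℕ) (q m : ℕ → ℝ) (β h : ℝ) : ℝ :=
  Real.log 2 + parisiLevel K q m β K h
    - β ^ 2 / 2 * ∫ r in (0 : ℝ)..((p : ℝ) / 2), qBar p r * xFunP p K q m r

/-! ## Gaussian analysis -/

lemma integrable_exp_abs_stdGauss (a : ℝ) :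
    Integrable (fun z : ℝ => Real.exp (a * |z|)) stdGauss := by
  unfold stdGauss
  exact integrable_exp_mul_abs (integrable_exp_mul_gaussianReal a)
    (integrable_exp_mul_gaussianReal (-a))

lemma integrable_of_growth {f : ℝ → ℝ} (hf : Continuous f) (A a : ℝ)
    (hb : ∀ z, |f z| ≤ A * Real.exp (a * |z|)) : Integrable f stdGauss := by
  refine Integrable.mono' ((integrable_exp_abs_stdGauss a).const_mul A)
    hf.aestronglyMeasurable (Eventually.of_forall fun z => ?_)
  simpa using hb z

lemma abs_le_exp_abs (z : ℝ) : |z| ≤ Real.exp |z| := by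
  have := Real.add_one_le_exp |z|; linarith

lemma integrable_mul_of_growth {f : ℝ → ℝ} (hf : Continuous f) (A a : ℝ)
    (hb : ∀ z, |f z| ≤ A * Real.exp (a * |z|)) :
    Integrable (fun z => z * f z) stdGauss := by
  refine integrable_of_growth (by fun_prop) A (a + 1) fun z => ?_
  rw [abs_mul]
  calc |z| * |f z| ≤ Real.exp |z| * (A * Real.exp (a * |z|)) :=
        mul_le_mul (abs_le_exp_abs z) (hb z) (abs_nonneg _) (Real.exp_pos _).le
    _ = A * Real.exp ((a + 1) * |z|) := by
        rw [show (a + 1) * |z| = |z| + a * |z| by ring, Real.exp_add]; ring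

lemma integrable_pdf_mul {f : ℝ → ℝ} (hf : Integrable f stdGauss) :
    Integrable (fun z => gaussianPDFReal 0 1 z * f z) := by
  unfold stdGauss at hf
  rw [gaussianReal_of_var_ne_zero _ one_ne_zero] at hf
  rw [integrable_withDensity_iff_integrable_smul' (measurable_gaussianPDF _ _)
    (Eventually.of_forall fun _ => gaussianPDF_lt_top)] at hf
  simpa [toReal_gaussianPDF] using hf

/-- Gaussian integration by parts in one dimension. -/
lemma stein {f f' : ℝ → ℝ} (hd : ∀ z, HasDerivAt f (f' z) z)
    (hf : Integrable f stdGauss) (hf' : Integrable f' stdGauss)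
    (hzf : Integrable (fun z => z * f z) stdGauss) :
    ∫ z, z * f z ∂stdGauss = ∫ z, f' z ∂stdGauss := by
  have h1 := integrable_pdf_mul hf
  have h2 := integrable_pdf_mul hf'
  have h3 := integrable_pdf_mul hzf
  have hpdf : ∀ z : ℝ, HasDerivAt (gaussianPDFReal 0 1) (-z * gaussianPDFReal 0 1 z) z := by
    intro z
    unfold gaussianPDFReal
    have : HasDerivAt (fun x : ℝ => -(x - 0) ^ 2 / (2 * ((1 : NNReal) : ℝ))) (-z) z := by
      have := ((hasDerivAt_id z).sub_const 0).pow 2 |>.neg.div_const (2 * ((1 : NNReal) : ℝ))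
      refine this.congr_deriv ?_
      simp
      ring
    refine (this.exp.const_mul _).congr_deriv ?_
    ring
  have key := integral_eq_zero_of_hasDerivAt_of_integrable
    (f := fun z => gaussianPDFReal 0 1 z * f z)
    (f' := fun z => gaussianPDFReal 0 1 z * f' z - gaussianPDFReal 0 1 z * (z * f z))
    (fun z => ((hpdf z).mul (hd z)).congr_deriv (by ring)) (h2.sub h3) h1
  rw [integral_sub h2 h3] at key
  unfold stdGauss
  rw [integral_gaussianReal_eq_integral_smul one_ne_zero,
    integral_gaussianReal_eq_integral_smul one_ne_zero]
  simp only [smul_eq_mul]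
  linarith

/-! ## Functions of exponential growth on `ι → ℝ` -/

/-- Continuous functions with at most exponential growth. -/
def EG {ι : Type} [Fintype ι] (φ : (ι → ℝ) → ℝ) : Prop :=
  Continuous φ ∧ ∃ A a : ℝ, 0 ≤ A ∧ 0 ≤ a ∧ ∀ x, |φ x| ≤ A * Real.exp (a * ‖x‖)

section EGsec
variable {ι : Type} [Fintype ι] {φ ψ : (ι → ℝ) → ℝ}

lemma EG.const (c : ℝ) : EG (fun _ : ι → ℝ => c) :=
  ⟨continuous_const, |c|, 0, abs_nonneg _, le_rfl, fun x => by simp⟩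

lemma EG.of_bdd (hc : Continuous φ) (C : ℝ) (hb : ∀ x, |φ x| ≤ C) : EG φ :=
  ⟨hc, C, 0, (abs_nonneg _).trans (hb 0), le_rfl, fun x => by simpa using hb x⟩

lemma EG.mul (h1 : EG φ) (h2 : EG ψ) : EG (fun x => φ x * ψ x) := by
  obtain ⟨c1, A, a, hA, ha, hb⟩ := h1
  obtain ⟨c2, B, b, hB, hb', hb2⟩ := h2
  refine ⟨c1.mul c2, A * B, a + b, by positivity, by positivity, fun x => ?_⟩
  rw [abs_mul, add_mul, Real.exp_add]
  calc _ ≤ (A * Real.exp (a * ‖x‖)) * (B * Real.exp (b * ‖x‖)) :=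
        mul_le_mul (hb x) (hb2 x) (abs_nonneg _) (by positivity)
    _ = _ := by ring

lemma EG.add (h1 : EG φ) (h2 : EG ψ) : EG (fun x => φ x + ψ x) := by
  obtain ⟨c1, A, a, hA, ha, hb⟩ := h1
  obtain ⟨c2, B, b, hB, hb', hb2⟩ := h2
  refine ⟨c1.add c2, A + B, a + b, by positivity, by positivity, fun x => ?_⟩
  have e1 : Real.exp (a * ‖x‖) ≤ Real.exp ((a + b) * ‖x‖) := by
    apply Real.exp_le_exp.2; nlinarith [norm_nonneg x]
  have e2 : Real.exp (b * ‖x‖) ≤ Real.exp ((a + b) * ‖x‖) := by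
    apply Real.exp_le_exp.2; nlinarith [norm_nonneg x]
  calc |φ x + ψ x| ≤ |φ x| + |ψ x| := abs_add_le _ _
    _ ≤ A * Real.exp (a * ‖x‖) + B * Real.exp (b * ‖x‖) := add_le_add (hb x) (hb2 x)
    _ ≤ A * Real.exp ((a + b) * ‖x‖) + B * Real.exp ((a + b) * ‖x‖) := by gcongr
    _ = _ := by ring

lemma EG.sum {κ : Type} (s : Finset κ) {f : κ → (ι → ℝ) → ℝ} (h : ∀ k, EG (f k)) :
    EG (fun x => ∑ k ∈ s, f k x) := by
  classical
  induction s using Finset.induction_on with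
  | empty => simpa using EG.const (ι := ι) 0
  | insert k s hk ih =>
    simp only [Finset.sum_insert hk]
    exact (h k).add ih

lemma continuous_of_lip (hL : ∀ x y, |φ x - φ y| ≤ ‖x - y‖) : Continuous φ := by
  have : LipschitzWith 1 φ := LipschitzWith.of_dist_le_mul fun x y => by
    simpa [dist_eq_norm, Real.dist_eq] using hL x y
  exact this.continuous

lemma lip_growth (hL : ∀ x y, |φ x - φ y| ≤ ‖x - y‖) (x : ι → ℝ) :
    |φ x| ≤ |φ 0| + ‖x‖ := by
  have := hL x 0
  rw [sub_zero] at this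
  have h2 := abs_add_le (φ x - φ 0) (φ 0)
  simp only [sub_add_cancel] at h2
  linarith

lemma EG.of_lip (hL : ∀ x y, |φ x - φ y| ≤ ‖x - y‖) : EG φ := by
  refine ⟨continuous_of_lip hL, |φ 0| + 1, 1, by positivity, zero_le_one, fun x => ?_⟩
  have h1 := lip_growth hL x
  have h2 := Real.add_one_le_exp ‖x‖
  rw [one_mul]
  nlinarith [norm_nonneg x, abs_nonneg (φ 0)]

lemma EG.exp_lip (hL : ∀ x y, |φ x - φ y| ≤ ‖x - y‖) (m : ℝ) :
    EG (fun x => Real.exp (m * φ x)) := by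
  refine ⟨by have := continuous_of_lip hL; fun_prop, Real.exp (|m| * |φ 0|), |m|,
    (Real.exp_pos _).le, abs_nonneg _, fun x => ?_⟩
  rw [abs_of_pos (Real.exp_pos _), ← Real.exp_add]
  apply Real.exp_le_exp.2
  calc m * φ x ≤ |m| * |φ x| := by rw [← abs_mul]; exact le_abs_self _
    _ ≤ |m| * (|φ 0| + ‖x‖) := by gcongr; exact lip_growth hL x
    _ = _ := by ring

lemma EG.line (h : EG φ) (x v : ι → ℝ) :
    Continuous (fun z : ℝ => φ (x + z • v)) ∧ ∃ A a : ℝ,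
      ∀ z : ℝ, |φ (x + z • v)| ≤ A * Real.exp (a * |z|) := by
  obtain ⟨c1, A, a, hA, ha, hb⟩ := h
  refine ⟨by fun_prop, A * Real.exp (a * ‖x‖), a * ‖v‖, fun z => ?_⟩
  refine (hb _).trans ?_
  rw [mul_assoc, ← Real.exp_add]
  gcongr
  have : ‖x + z • v‖ ≤ ‖x‖ + |z| * ‖v‖ := by
    refine (norm_add_le _ _).trans ?_
    rw [norm_smul, Real.norm_eq_abs]
  nlinarith

lemma EG.integrable (h : EG φ) (x v : ι → ℝ) :
    Integrable (fun z : ℝ => φ (x + z • v)) stdGauss := by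
  obtain ⟨c, A, a, hb⟩ := h.line x v
  exact integrable_of_growth c A a hb

lemma EG.integrable_mul (h : EG φ) (x v : ι → ℝ) :
    Integrable (fun z : ℝ => z * φ (x + z • v)) stdGauss := by
  obtain ⟨c, A, a, hb⟩ := h.line x v
  exact integrable_mul_of_growth c A a hb

lemma EG.local_bound (h : EG φ) (x v : ι → ℝ) (R : ℝ) :
    ∃ g : ℝ → ℝ, Integrable g stdGauss ∧ ∀ y, ‖y - x‖ ≤ R → ∀ z : ℝ, |φ (y + z • v)| ≤ g z := by
  obtain ⟨c1, A, a, hA, ha, hb⟩ := h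
  refine ⟨fun z => A * Real.exp (a * (‖x‖ + R)) * Real.exp ((a * ‖v‖) * |z|),
    (integrable_exp_abs_stdGauss _).const_mul _, fun y hy z => (hb _).trans ?_⟩
  show _ ≤ A * Real.exp (a * (‖x‖ + R)) * Real.exp ((a * ‖v‖) * |z|)
  rw [mul_assoc, ← Real.exp_add]
  gcongr
  have : ‖y + z • v‖ ≤ ‖x‖ + R + |z| * ‖v‖ := by
    have e : y + z • v = x + (y - x) + z • v := by abel
    rw [e]
    refine (norm_add₃_le).trans ?_
    rw [norm_smul, Real.norm_eq_abs]; linarith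
  nlinarith

lemma EG.cont_int (h : EG φ) (v : ι → ℝ) :
    Continuous (fun x => ∫ z, φ (x + z • v) ∂stdGauss) := by
  rw [continuous_iff_continuousAt]
  intro x
  obtain ⟨g, hg, hgb⟩ := h.local_bound x v 1
  have hc := h.1
  refine continuousAt_of_dominated (bound := g) ?_ ?_ hg ?_
  · exact Eventually.of_forall fun y => Continuous.aestronglyMeasurable (by fun_prop)
  · filter_upwards [Metric.closedBall_mem_nhds x one_pos] with y hy
    refine Eventually.of_forall fun z => ?_
    rw [Metric.mem_closedBall, dist_eq_norm] at hy
    exact hgb y hy z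
  · exact Eventually.of_forall fun z => by fun_prop

lemma hasDerivAt_line {f : (ι → ℝ) → ℝ} {g : (ι → ℝ) → ℝ} {v : ι → ℝ}
    (hd : ∀ x, HasDerivAt (fun s : ℝ => f (x + s • v)) (g x) 0) (x : ι → ℝ) (s : ℝ) :
    HasDerivAt (fun s : ℝ => f (x + s • v)) (g (x + s • v)) s := by
  have h := hd (x + s • v)
  have h2 : HasDerivAt (fun s : ℝ => f (x + s • v)) (g (x + s • v)) (0 + s) := by
    have h3 := HasDerivAt.comp_sub_const (0 + s) s
      (f := fun r : ℝ => f (x + s • v + r • v)) (f' := g (x + s • v)) (by simpa using h)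
    refine h3.congr_of_eventuallyEq (Eventually.of_forall fun r => ?_)
    show f _ = f _
    congr 1
    rw [add_assoc, ← add_smul]; congr 2; ring
  simpa using h2

lemma EG.deriv_int (h : EG φ) (hψ : EG ψ) (v w : ι → ℝ)
    (hd : ∀ x, HasDerivAt (fun s : ℝ => φ (x + s • w)) (ψ x) 0) (x : ι → ℝ) :
    HasDerivAt (fun s : ℝ => ∫ z, φ ((x + s • w) + z • v) ∂stdGauss)
      (∫ z, ψ (x + z • v) ∂stdGauss) 0 := by
  obtain ⟨g, hg, hgb⟩ := hψ.local_bound x v ‖w‖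
  have hc := h.1
  have hc2 := hψ.1
  have key := (hasDerivAt_integral_of_dominated_loc_of_deriv_le (μ := stdGauss)
    (F := fun s z => φ ((x + s • w) + z • v)) (F' := fun s z => ψ ((x + s • w) + z • v))
    (x₀ := (0 : ℝ)) (bound := g) (Metric.closedBall_mem_nhds 0 one_pos)
    (Eventually.of_forall fun y => Continuous.aestronglyMeasurable (by fun_prop))
    (h.integrable _ _) (Continuous.aestronglyMeasurable (by fun_prop))
    (Eventually.of_forall fun z s hs => ?_) hg
    (Eventually.of_forall fun z s hs => ?_)).2
  · simpa using key
  · refine hgb _ ?_ z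
    rw [Metric.mem_closedBall, dist_zero_right] at hs
    rw [add_sub_cancel_left, norm_smul]
    nlinarith [norm_nonneg w]
  · have := hasDerivAt_line hd (x + z • v) s
    simp only [add_right_comm x (z • v)] at this
    exact this

end EGsec

/-! ## States: a function with its gradient and Hessian -/

/-- A function on `ι → ℝ` together with its gradient and Hessian. -/
structure GState (ι : Type) where
  L : (ι → ℝ) → ℝ
  p : ι → (ι → ℝ) → ℝ
  Q : ι → ι → (ι → ℝ) → ℝ

/-- `p` is the gradient of `L` (a probability vector), `Q` the bounded continuous Hessian. -/
structure GState.Good {ι : Type} [Fintype ι] (S : GState ι) : Prop where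
  p_nonneg : ∀ i x, 0 ≤ S.p i x
  p_sum : ∀ x, ∑ i, S.p i x = 1
  dL : ∀ x v, HasDerivAt (fun s : ℝ => S.L (x + s • v)) (∑ i, S.p i x * v i) 0
  dp : ∀ i x v, HasDerivAt (fun s : ℝ => S.p i (x + s • v)) (∑ j, S.Q i j x * v j) 0
  Qbd : ∃ C, ∀ i j x, |S.Q i j x| ≤ C
  Qcont : ∀ i j, Continuous (S.Q i j)

section Core
variable {ι : Type} [Fintype ι]

lemma lip_of_deriv {f : (ι → ℝ) → ℝ} {g : (ι → ℝ) → (ι → ℝ) → ℝ} {C : ℝ}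
    (hd : ∀ x v, HasDerivAt (fun s : ℝ => f (x + s • v)) (g v x) 0)
    (hb : ∀ x v, |g v x| ≤ C * ‖v‖) (x y : ι → ℝ) : |f x - f y| ≤ C * ‖x - y‖ := by
  have h1 : ∀ s : ℝ, HasDerivAt (fun s : ℝ => f (y + s • (x - y)))
      (g (x - y) (y + s • (x - y))) s := fun s => hasDerivAt_line (fun z => hd z (x - y)) y s
  have h2 := Convex.norm_image_sub_le_of_norm_hasDerivWithin_le
    (s := Set.univ) (C := C * ‖x - y‖) (f := fun s : ℝ => f (y + s • (x - y)))
    (fun s _ => (h1 s).hasDerivWithinAt) (fun s _ => hb _ _) convex_univ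
    (Set.mem_univ 0) (Set.mem_univ 1)
  simpa using h2

namespace GState.Good
variable {S : GState ι} (hS : S.Good)

lemma p_le_one (hS : S.Good) (i : ι) (x : ι → ℝ) : S.p i x ≤ 1 := by
  rw [← hS.p_sum x]
  exact Finset.single_le_sum (f := fun i => S.p i x) (fun j _ => hS.p_nonneg j x)
    (Finset.mem_univ i)

lemma p_abs (hS : S.Good) (i : ι) (x : ι → ℝ) : |S.p i x| ≤ 1 := by
  rw [abs_of_nonneg (hS.p_nonneg i x)]; exact hS.p_le_one i x

lemma lip (hS : S.Good) (x y : ι → ℝ) : |S.L x - S.L y| ≤ ‖x - y‖ := by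
  have := lip_of_deriv (C := 1) (g := fun v x => ∑ i, S.p i x * v i) hS.dL (fun x v => ?_) x y
  · simpa using this
  · calc |∑ i, S.p i x * v i| ≤ ∑ i, |S.p i x * v i| := Finset.abs_sum_le_sum_abs _ _
      _ ≤ ∑ i, S.p i x * ‖v‖ := by
        refine Finset.sum_le_sum fun i _ => ?_
        rw [abs_mul, abs_of_nonneg (hS.p_nonneg i x)]
        exact mul_le_mul_of_nonneg_left (norm_le_pi_norm v i) (hS.p_nonneg i x)
      _ = 1 * ‖v‖ := by rw [← Finset.sum_mul, hS.p_sum]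

lemma p_cont (hS : S.Good) (i : ι) : Continuous (S.p i) := by
  obtain ⟨C, hC⟩ := hS.Qbd
  have hl := lip_of_deriv (C := ∑ _j : ι, |C|) (g := fun v x => ∑ j, S.Q i j x * v j)
    (hS.dp i) (fun x v => ?_)
  · have hl' : LipschitzWith (Real.toNNReal (∑ _j : ι, |C|)) (S.p i) :=
      LipschitzWith.of_dist_le_mul fun x y => by
        rw [Real.coe_toNNReal _ (Finset.sum_nonneg fun _ _ => abs_nonneg _)]
        simpa [dist_eq_norm, Real.dist_eq] using hl x y
    exact hl'.continuous
  · rw [Finset.sum_mul]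
    refine (Finset.abs_sum_le_sum_abs _ _).trans (Finset.sum_le_sum fun j _ => ?_)
    rw [abs_mul]
    exact mul_le_mul ((hC i j x).trans (le_abs_self C)) (norm_le_pi_norm v j) (abs_nonneg _)
      (abs_nonneg _)

lemma egL (hS : S.Good) : EG S.L := EG.of_lip hS.lip
lemma egE (hS : S.Good) (m : ℝ) : EG (fun x => Real.exp (m * S.L x)) := EG.exp_lip hS.lip m
lemma egp (hS : S.Good) (i : ι) : EG (S.p i) := EG.of_bdd (hS.p_cont i) 1 (hS.p_abs i)
lemma egQ (hS : S.Good) (i j : ι) : EG (S.Q i j) := by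
  obtain ⟨C, hC⟩ := hS.Qbd
  exact EG.of_bdd (hS.Qcont i j) C (hC i j)

lemma egB (hS : S.Good) (m : ℝ) (i j : ι) :
    EG (fun x => S.Q i j x + m * (S.p i x * S.p j x)) :=
  (hS.egQ i j).add ((EG.const m).mul ((hS.egp i).mul (hS.egp j)))

end GState.Good

/-- The unnormalized tilted average. -/
def tnum (m : ℝ) (v : ι → ℝ) (L φ : (ι → ℝ) → ℝ) (x : ι → ℝ) : ℝ :=
  ∫ z, Real.exp (m * L (x + z • v)) * φ (x + z • v) ∂stdGauss

/-- The normalization. -/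
def tZ (m : ℝ) (v : ι → ℝ) (L : (ι → ℝ) → ℝ) (x : ι → ℝ) : ℝ :=
  ∫ z, Real.exp (m * L (x + z • v)) ∂stdGauss

/-- The tilted average. -/
def tavg (m : ℝ) (v : ι → ℝ) (L φ : (ι → ℝ) → ℝ) (x : ι → ℝ) : ℝ :=
  tnum m v L φ x / tZ m v L x

/-- One Parisi step in direction `v`. -/
def tStep (m : ℝ) (v : ι → ℝ) (L : (ι → ℝ) → ℝ) (x : ι → ℝ) : ℝ :=
  if m = 0 then ∫ z, L (x + z • v) ∂stdGauss else m⁻¹ * Real.log (tZ m v L x)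

/-- One Parisi step on states. -/
def GState.step (m : ℝ) (v : ι → ℝ) (S : GState ι) : GState ι where
  L := tStep m v S.L
  p i := tavg m v S.L (S.p i)
  Q i j x := tavg m v S.L (fun y => S.Q i j y + m * (S.p i y * S.p j y)) x
    - m * (tavg m v S.L (S.p i) x * tavg m v S.L (S.p j) x)

variable {S : GState ι}

lemma tZ_pos (hS : S.Good) (m : ℝ) (v x : ι → ℝ) : 0 < tZ m v S.L x :=
  integral_exp_pos ((hS.egE m).integrable x v)

lemma tavg_const (hS : S.Good) (m : ℝ) (v x : ι → ℝ) (c : ℝ) :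
    tavg m v S.L (fun _ => c) x = c := by
  unfold tavg tnum
  rw [integral_mul_const]
  exact mul_div_cancel_left₀ c (tZ_pos hS m v x).ne'

lemma tavg_add (hS : S.Good) (m : ℝ) (v x : ι → ℝ) {φ ψ : (ι → ℝ) → ℝ} (h1 : EG φ) (h2 : EG ψ) :
    tavg m v S.L (fun y => φ y + ψ y) x = tavg m v S.L φ x + tavg m v S.L ψ x := by
  unfold tavg tnum
  rw [← add_div, ← integral_add (((hS.egE m).mul h1).integrable x v)
    (((hS.egE m).mul h2).integrable x v)]
  simp only [mul_add]

lemma tavg_mul (m : ℝ) (v x : ι → ℝ) {L φ : (ι → ℝ) → ℝ} (c : ℝ) :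
    tavg m v L (fun y => c * φ y) x = c * tavg m v L φ x := by
  unfold tavg tnum
  rw [← mul_div_assoc, ← integral_const_mul]
  congr 2; ext z; ring

lemma tavg_sum (hS : S.Good) (m : ℝ) (v x : ι → ℝ) {κ : Type} (s : Finset κ)
    {f : κ → (ι → ℝ) → ℝ} (h : ∀ k, EG (f k)) :
    tavg m v S.L (fun y => ∑ k ∈ s, f k y) x = ∑ k ∈ s, tavg m v S.L (f k) x := by
  classical
  induction s using Finset.induction_on with
  | empty => simpa using tavg_const hS m v x 0
  | insert k s hk ih =>
    simp only [Finset.sum_insert hk]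
    rw [tavg_add hS m v x (h k) (EG.sum s h), ih]

lemma tavg_mono (hS : S.Good) (m : ℝ) (v x : ι → ℝ) {φ ψ : (ι → ℝ) → ℝ} (h1 : EG φ) (h2 : EG ψ)
    (h : ∀ y, φ y ≤ ψ y) : tavg m v S.L φ x ≤ tavg m v S.L ψ x := by
  unfold tavg tnum
  refine div_le_div_of_nonneg_right ?_ (tZ_pos hS m v x).le
  exact integral_mono (((hS.egE m).mul h1).integrable x v) (((hS.egE m).mul h2).integrable x v)
    fun z => mul_le_mul_of_nonneg_left (h _) (Real.exp_pos _).le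

lemma tavg_abs (hS : S.Good) (m : ℝ) (v x : ι → ℝ) {φ : (ι → ℝ) → ℝ} (h1 : EG φ) {C : ℝ}
    (h : ∀ y, |φ y| ≤ C) : |tavg m v S.L φ x| ≤ C := by
  rw [abs_le]
  constructor
  · rw [← tavg_const hS m v x (-C)]
    exact tavg_mono hS m v x (EG.const _) h1 fun y => (abs_le.1 (h y)).1
  · conv_rhs => rw [← tavg_const hS m v x C]
    exact tavg_mono hS m v x h1 (EG.const _) fun y => (abs_le.1 (h y)).2

lemma tavg_cont (hS : S.Good) (m : ℝ) (v : ι → ℝ) {φ : (ι → ℝ) → ℝ} (h1 : EG φ) :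
    Continuous (tavg m v S.L φ) :=
  (((hS.egE m).mul h1).cont_int v).div ((hS.egE m).cont_int v) fun x => (tZ_pos hS m v x).ne'

lemma dexp (hS : S.Good) (m : ℝ) (x w : ι → ℝ) :
    HasDerivAt (fun s : ℝ => Real.exp (m * S.L (x + s • w)))
      (∑ i, w i * (m * (Real.exp (m * S.L x) * S.p i x))) 0 := by
  have := ((hS.dL x w).const_mul m).exp
  refine this.congr_deriv ?_
  simp only [zero_smul, add_zero]
  rw [Finset.mul_sum, Finset.mul_sum]
  exact Finset.sum_congr rfl fun i _ => by ring

lemma egdexp (hS : S.Good) (m : ℝ) (w : ι → ℝ) :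
    EG (fun x => ∑ i, w i * (m * (Real.exp (m * S.L x) * S.p i x))) :=
  EG.sum _ fun i => (EG.const (w i)).mul ((EG.const m).mul ((hS.egE m).mul (hS.egp i)))

lemma int_lin (x v : ι → ℝ) (w : ι → ℝ) {f : ι → (ι → ℝ) → ℝ} (h : ∀ i, EG (f i)) :
    ∫ z, ∑ i, w i * f i (x + z • v) ∂stdGauss = ∑ i, w i * ∫ z, f i (x + z • v) ∂stdGauss := by
  rw [integral_finsetSum _ fun i _ => ((h i).integrable x v).const_mul (w i)]
  simp only [integral_const_mul]

lemma dZ (hS : S.Good) (m : ℝ) (v x w : ι → ℝ) :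
    HasDerivAt (fun s : ℝ => tZ m v S.L (x + s • w))
      (∑ i, w i * (m * tnum m v S.L (S.p i) x)) 0 := by
  have := (hS.egE m).deriv_int (egdexp hS m w) v w (fun y => dexp hS m y w) x
  refine this.congr_deriv ?_
  rw [int_lin x v w (f := fun i y => m * (Real.exp (m * S.L y) * S.p i y))
    fun i => (EG.const m).mul ((hS.egE m).mul (hS.egp i))]
  simp only [integral_const_mul, tnum]

lemma dnum (hS : S.Good) (m : ℝ) (v x w : ι → ℝ) (i : ι) :
    HasDerivAt (fun s : ℝ => tnum m v S.L (S.p i) (x + s • w))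
      (∑ j, w j * tnum m v S.L (fun y => S.Q i j y + m * (S.p i y * S.p j y)) x) 0 := by
  have hd : ∀ y, HasDerivAt (fun s : ℝ => Real.exp (m * S.L (y + s • w)) * S.p i (y + s • w))
      (∑ j, w j * (Real.exp (m * S.L y) * (S.Q i j y + m * (S.p i y * S.p j y)))) 0 := by
    intro y
    refine ((dexp hS m y w).mul (hS.dp i y w)).congr_deriv ?_
    simp only [zero_smul, add_zero]
    rw [Finset.sum_mul, Finset.mul_sum, ← Finset.sum_add_distrib]
    exact Finset.sum_congr rfl fun i _ => by ring
  have heg : ∀ j, EG (fun y => Real.exp (m * S.L y) * (S.Q i j y + m * (S.p i y * S.p j y))) :=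
    fun j => (hS.egE m).mul (hS.egB m i j)
  have := ((hS.egE m).mul (hS.egp i)).deriv_int
    (EG.sum Finset.univ fun j => (EG.const (w j)).mul (heg j)) v w hd x
  refine this.congr_deriv ?_
  rw [int_lin x v w heg]
  rfl

lemma dstepL (hS : S.Good) (m : ℝ) (v x w : ι → ℝ) :
    HasDerivAt (fun s : ℝ => tStep m v S.L (x + s • w))
      (∑ i, tavg m v S.L (S.p i) x * w i) 0 := by
  by_cases hm : m = 0
  · subst hm
    simp only [tStep, if_true]
    have heg : ∀ i, EG (fun y => S.p i y) := fun i => hS.egp i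
    have := hS.egL.deriv_int (ψ := fun y => ∑ i, w i * S.p i y)
      (EG.sum Finset.univ fun j => (EG.const (w j)).mul (heg j)) v w
      (fun y => (hS.dL y w).congr_deriv (Finset.sum_congr rfl fun i _ => mul_comm _ _)) x
    refine this.congr_deriv ?_
    rw [int_lin x v w heg]
    refine Finset.sum_congr rfl fun i _ => ?_
    simp [tavg, tnum, tZ, mul_comm]
  · simp only [tStep, if_neg hm]
    refine (((dZ hS m v x w).log (by simpa using (tZ_pos hS m v x).ne')).const_mul
      m⁻¹).congr_deriv ?_
    simp only [zero_smul, add_zero]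
    rw [Finset.sum_div, Finset.mul_sum]
    refine Finset.sum_congr rfl fun i _ => ?_
    unfold tavg
    have := (tZ_pos hS m v x).ne'
    field_simp

lemma dstepp (hS : S.Good) (m : ℝ) (v x w : ι → ℝ) (i : ι) :
    HasDerivAt (fun s : ℝ => tavg m v S.L (S.p i) (x + s • w))
      (∑ j, (S.step m v).Q i j x * w j) 0 := by
  have hz := (tZ_pos hS m v x).ne'
  refine ((dnum hS m v x w i).div (dZ hS m v x w) (by simpa using hz)).congr_deriv ?_
  simp only [zero_smul, add_zero, GState.step]
  rw [Finset.sum_mul, Finset.mul_sum, ← Finset.sum_sub_distrib, Finset.sum_div]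
  refine Finset.sum_congr rfl fun j _ => ?_
  unfold tavg
  field_simp

lemma GState.Good.step (hS : S.Good) (m : ℝ) (v : ι → ℝ) : (S.step m v).Good where
  p_nonneg i x := by
    have := tavg_mono hS m v x (EG.const 0) (hS.egp i) (hS.p_nonneg i)
    rwa [tavg_const hS] at this
  p_sum x := by
    show ∑ i, tavg m v S.L (S.p i) x = 1
    rw [← tavg_sum hS m v x Finset.univ hS.egp]
    simp only [hS.p_sum]
    exact tavg_const hS m v x 1
  dL x w := dstepL hS m v x w
  dp i x w := dstepp hS m v x w i
  Qbd := by
    obtain ⟨C, hC⟩ := hS.Qbd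
    refine ⟨(C + |m| * 1) + |m| * 1, fun i j x => ?_⟩
    have hp : ∀ i j y, |S.p i y * S.p j y| ≤ 1 := fun i j y => by
      rw [abs_mul]
      exact mul_le_one₀ (hS.p_abs i y) (abs_nonneg _) (hS.p_abs j y)
    have h1 := tavg_abs hS m v x (hS.egB m i j) (C := C + |m| * 1) fun y => by
      refine (abs_add_le _ _).trans (add_le_add (hC i j y) ?_)
      rw [abs_mul]
      exact mul_le_mul_of_nonneg_left (hp i j y) (abs_nonneg m)
    refine (abs_sub _ _).trans (add_le_add h1 ?_)
    rw [abs_mul, abs_mul]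
    refine mul_le_mul_of_nonneg_left ?_ (abs_nonneg m)
    exact mul_le_one₀ (tavg_abs hS m v x (hS.egp i) (hS.p_abs i)) (abs_nonneg _)
      (tavg_abs hS m v x (hS.egp j) (hS.p_abs j))
  Qcont i j := (tavg_cont hS m v (hS.egB m i j)).sub
    (((tavg_cont hS m v (hS.egp i)).mul (tavg_cont hS m v (hS.egp j))).const_mul m)

end Core

lemma jensen_step {m : ℝ} (hm : 0 ≤ m) {F G : ℝ → ℝ} (hF : Integrable F stdGauss)
    (hG : Integrable G stdGauss)
    (heF : Integrable (fun z => Real.exp (m * F z)) stdGauss)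
    (heG : Integrable (fun z => Real.exp (m * G z)) stdGauss)
    (hFG : Integrable (fun z => Real.exp (m * G z) * (F z - G z)) stdGauss) :
    (if m = 0 then ∫ z, G z ∂stdGauss
      else m⁻¹ * Real.log (∫ z, Real.exp (m * G z) ∂stdGauss))
      + (∫ z, Real.exp (m * G z) * (F z - G z) ∂stdGauss)
          / (∫ z, Real.exp (m * G z) ∂stdGauss)
    ≤ (if m = 0 then ∫ z, F z ∂stdGauss
      else m⁻¹ * Real.log (∫ z, Real.exp (m * F z) ∂stdGauss)) := by
  by_cases h0 : m = 0
  · subst h0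
    simp [integral_sub hF hG]
  · simp only [if_neg h0]
    have hmp : 0 < m := lt_of_le_of_ne hm (Ne.symm h0)
    set Z := ∫ z, Real.exp (m * G z) ∂stdGauss with hZ
    have hZp : 0 < Z := integral_exp_pos heG
    set u := (∫ z, Real.exp (m * G z) * (F z - G z) ∂stdGauss) / Z with hu
    have hI : ∫ z, Real.exp (m * G z) * (F z - G z) ∂stdGauss = u * Z := by
      rw [hu]; field_simp
    have key : Real.exp (m * u) * Z ≤ ∫ z, Real.exp (m * F z) ∂stdGauss := by
      have e1 : ∫ z, Real.exp (m * u) * ((1 - m * u) * Real.exp (m * G z)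
          + m * (Real.exp (m * G z) * (F z - G z))) ∂stdGauss = Real.exp (m * u) * Z := by
        rw [integral_const_mul, integral_add (heG.const_mul _) (hFG.const_mul _),
          integral_const_mul, integral_const_mul, hI, ← hZ]
        ring
      rw [← e1]
      refine integral_mono (((heG.const_mul _).add (hFG.const_mul _)).const_mul _) heF fun z => ?_
      have e2 : Real.exp (m * F z) = Real.exp (m * u) * (Real.exp (m * G z) *
          Real.exp (m * (F z - G z) - m * u)) := by
        rw [← Real.exp_add, ← Real.exp_add]; congr 1; ring
      show Real.exp (m * u) * _ ≤ Real.exp (m * F z)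
      rw [e2]
      refine mul_le_mul_of_nonneg_left ?_ (Real.exp_pos _).le
      have := Real.add_one_le_exp (m * (F z - G z) - m * u)
      have := mul_le_mul_of_nonneg_left this (Real.exp_pos (m * G z)).le
      linarith
    have h2 := Real.log_le_log (by positivity) key
    rw [Real.log_mul (Real.exp_pos _).ne' hZp.ne', Real.log_exp] at h2
    have h3 := mul_le_mul_of_nonneg_left h2 (inv_pos.2 hmp).le
    rw [mul_add, inv_mul_cancel_left₀ h0] at h3
    linarith

section Frozen
variable {ι : Type} [Fintype ι]

/-- Lower bound of a perturbed functional `Ls` in terms of the reference state. -/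
def Low (Ls : (ι → ℝ) → ℝ) (S : GState ι) (A : ι → ι → ℝ) (m0 v : ℝ) : Prop :=
  ∀ x y, S.L x + ∑ i, S.p i x * (y i - x i) + v
    - ∑ i, ∑ j, A i j * (S.Q i j x + m0 * (S.p i x * S.p j x)) ≤ Ls y

variable {S S' : GState ι}

lemma stein_state (hS : S.Good) (m : ℝ) (x w : ι → ℝ) (i : ι) :
    ∫ z, z * (Real.exp (m * S.L (x + z • w)) * S.p i (x + z • w)) ∂stdGauss
      = ∑ j, w j * tnum m w S.L (fun y => S.Q i j y + m * (S.p i y * S.p j y)) x := by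
  have hd : ∀ y, HasDerivAt (fun s : ℝ => Real.exp (m * S.L (y + s • w)) * S.p i (y + s • w))
      (∑ j, w j * (Real.exp (m * S.L y) * (S.Q i j y + m * (S.p i y * S.p j y)))) 0 := by
    intro y
    refine ((dexp hS m y w).mul (hS.dp i y w)).congr_deriv ?_
    simp only [zero_smul, add_zero]
    rw [Finset.sum_mul, Finset.mul_sum, ← Finset.sum_add_distrib]
    exact Finset.sum_congr rfl fun i _ => by ring
  have heg : ∀ j, EG (fun y => Real.exp (m * S.L y) * (S.Q i j y + m * (S.p i y * S.p j y))) :=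
    fun j => (hS.egE m).mul (hS.egB m i j)
  have h1 := (hS.egE m).mul (hS.egp i)
  have h2 := EG.sum Finset.univ fun j => (EG.const (w j)).mul (heg j)
  rw [stein (fun z => hasDerivAt_line
    (f := fun y => Real.exp (m * S.L y) * S.p i y) hd x z) (h1.integrable x w)
    (h2.integrable x w) (h1.integrable_mul x w)]
  rw [int_lin x w w heg]
  rfl

lemma Low.cons (hS : S.Good) (hS' : S'.Good) {m : ℝ} (hm : 0 ≤ m) (b : ι → ℝ) (ct cs : ℝ)
    {A : ι → ι → ℝ} {v : ℝ}
    (h : Low S'.L S (fun i j => A i j + (cs - ct) * ct * (b i * b j)) m v) :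
    Low (S'.step m (cs • b)).L (S.step m (ct • b)) A m v := by
  intro x y
  set w := ct • b with hw
  set w' := cs • b with hw'
  have iF := hS'.egL.integrable y w'
  have iG := hS.egL.integrable x w
  have ieF := (hS'.egE m).integrable y w'
  have ieG := (hS.egE m).integrable x w
  have iFG : Integrable (fun z : ℝ => Real.exp (m * S.L (x + z • w)) *
      (S'.L (y + z • w') - S.L (x + z • w))) stdGauss := by
    obtain ⟨c1, A1, a1, hb1⟩ := (hS.egE m).line x w
    obtain ⟨c2, A2, a2, hb2⟩ := hS'.egL.line y w'
    have i1 : Integrable (fun z : ℝ => Real.exp (m * S.L (x + z • w)) *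
        S'.L (y + z • w')) stdGauss := by
      refine integrable_of_growth (c1.mul c2) (A1 * A2) (a1 + a2) fun z => ?_
      rw [abs_mul, add_mul, Real.exp_add]
      calc _ ≤ (A1 * Real.exp (a1 * |z|)) * (A2 * Real.exp (a2 * |z|)) :=
            mul_le_mul (hb1 z) (hb2 z) (abs_nonneg _) ((abs_nonneg _).trans (hb1 z))
        _ = _ := by ring
    have i2 := ((hS.egE m).mul hS.egL).integrable x w
    refine (i1.sub i2).congr (Eventually.of_forall fun z => ?_)
    simp only [Pi.sub_apply]; ring
  have hJ := jensen_step hm iF iG ieF ieG iFG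
  have hZ := tZ_pos hS m w x
  -- the reference integrand
  set B : ι → ι → (ι → ℝ) → ℝ := fun i j y => S.Q i j y + m * (S.p i y * S.p j y) with hB
  have egBB : ∀ i j, EG (B i j) := fun i j => hS.egB m i j
  set A' : ι → ι → ℝ := fun i j => A i j + (cs - ct) * ct * (b i * b j) with hA'
  set ψ : (ι → ℝ) → ℝ := fun q => (∑ i, (y i - x i) * S.p i q) + (v
    + ∑ i, ∑ j, (-A' i j) * B i j q) with hψ
  have egψ : EG ψ := (EG.sum _ fun i => (EG.const _).mul (hS.egp i)).add
    ((EG.const v).add (EG.sum _ fun i => EG.sum _ fun j => (EG.const _).mul (egBB i j)))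
  have iz : ∀ i, Integrable (fun z : ℝ => z * (Real.exp (m * S.L (x + z • w)) *
      S.p i (x + z • w))) stdGauss := fun i => ((hS.egE m).mul (hS.egp i)).integrable_mul x w
  have iψ := ((hS.egE m).mul egψ).integrable x w
  have low : tnum m w S.L ψ x + ∑ i, ((cs - ct) * b i) * ∑ j, w j * tnum m w S.L (B i j) x ≤
      ∫ z, Real.exp (m * S.L (x + z • w)) *
        (S'.L (y + z • w') - S.L (x + z • w)) ∂stdGauss := by
    have e : tnum m w S.L ψ x + ∑ i, ((cs - ct) * b i) * ∑ j, w j * tnum m w S.L (B i j) x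
        = ∫ z, (Real.exp (m * S.L (x + z • w)) * ψ (x + z • w) +
          ∑ i, ((cs - ct) * b i) * (z * (Real.exp (m * S.L (x + z • w)) * S.p i (x + z • w))))
          ∂stdGauss := by
      rw [integral_add iψ (integrable_finsetSum _ fun i _ => (iz i).const_mul _),
        integral_finsetSum _ fun i _ => (iz i).const_mul _]
      simp only [integral_const_mul, stein_state hS]
      rfl
    rw [e]
    refine integral_mono (iψ.add (integrable_finsetSum _ fun i _ => (iz i).const_mul _)) iFG
      fun z => ?_
    have hl := h (x + z • w) (y + z • w')
    show Real.exp (m * S.L (x + z • w)) * ψ (x + z • w) +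
      ∑ i, ((cs - ct) * b i) * (z * (Real.exp (m * S.L (x + z • w)) * S.p i (x + z • w))) ≤
      Real.exp (m * S.L (x + z • w)) * (S'.L (y + z • w') - S.L (x + z • w))
    have e2 : ∑ i, ((cs - ct) * b i) * (z * (Real.exp (m * S.L (x + z • w)) * S.p i (x + z • w)))
        = Real.exp (m * S.L (x + z • w)) * ∑ i, ((cs - ct) * b i) * (z * S.p i (x + z • w)) := by
      rw [Finset.mul_sum]; exact Finset.sum_congr rfl fun i _ => by ring
    rw [e2, ← mul_add]
    refine mul_le_mul_of_nonneg_left ?_ (Real.exp_pos _).le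
    have e3 : ∑ i, S.p i (x + z • w) * ((y + z • w') i - (x + z • w) i)
        = ∑ i, (y i - x i) * S.p i (x + z • w)
          + ∑ i, ((cs - ct) * b i) * (z * S.p i (x + z • w)) := by
      rw [← Finset.sum_add_distrib]
      refine Finset.sum_congr rfl fun i _ => ?_
      simp only [hw, hw', Pi.add_apply, Pi.smul_apply, smul_eq_mul]; ring
    rw [e3] at hl
    have e4 : ∑ i, ∑ j, (-A' i j) * B i j (x + z • w)
        = - ∑ i, ∑ j, A' i j * B i j (x + z • w) := by
      simp only [neg_mul, Finset.sum_neg_distrib]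
    simp only [hψ]
    rw [e4]
    linarith
  have low2 := div_le_div_of_nonneg_right low hZ.le
  have e5 : (tnum m w S.L ψ x + ∑ i, ((cs - ct) * b i) * ∑ j, w j * tnum m w S.L (B i j) x)
      / tZ m w S.L x = ∑ i, (S.step m w).p i x * (y i - x i) + v
      - ∑ i, ∑ j, A i j * tavg m w S.L (B i j) x := by
    have f1 : tnum m w S.L ψ x / tZ m w S.L x = ∑ i, (y i - x i) * tavg m w S.L (S.p i) x
        + (v + ∑ i, ∑ j, (-A' i j) * tavg m w S.L (B i j) x) := by
      show tavg m w S.L ψ x = _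
      rw [hψ, tavg_add hS m w x (EG.sum _ fun i => (EG.const _).mul (hS.egp i))
        ((EG.const v).add (EG.sum _ fun i => EG.sum _ fun j => (EG.const _).mul (egBB i j))),
        tavg_add hS m w x (EG.const v)
          (EG.sum _ fun i => EG.sum _ fun j => (EG.const _).mul (egBB i j)),
        tavg_const hS, tavg_sum hS m w x _ fun i => (EG.const _).mul (hS.egp i),
        tavg_sum hS m w x _ fun i => EG.sum _ fun j => (EG.const _).mul (egBB i j)]
      congr 1
      · exact Finset.sum_congr rfl fun i _ => tavg_mul _ _ _ _
      · congr 1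
        refine Finset.sum_congr rfl fun i _ => ?_
        rw [tavg_sum hS m w x _ fun j => (EG.const _).mul (egBB i j)]
        exact Finset.sum_congr rfl fun j _ => tavg_mul _ _ _ _
    have f2 : (∑ i, ((cs - ct) * b i) * ∑ j, w j * tnum m w S.L (B i j) x) / tZ m w S.L x
        = ∑ i, ∑ j, ((cs - ct) * ct * (b i * b j)) * tavg m w S.L (B i j) x := by
      rw [Finset.sum_div]
      refine Finset.sum_congr rfl fun i _ => ?_
      rw [Finset.mul_sum, Finset.sum_div]
      refine Finset.sum_congr rfl fun j _ => ?_
      simp only [hw, Pi.smul_apply, smul_eq_mul, tavg]; ring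
    rw [add_div, f1, f2]
    have f3 : ∑ i, ∑ j, (-A' i j) * tavg m w S.L (B i j) x
        = -∑ i, ∑ j, A i j * tavg m w S.L (B i j) x
          - ∑ i, ∑ j, ((cs - ct) * ct * (b i * b j)) * tavg m w S.L (B i j) x := by
      rw [← Finset.sum_neg_distrib, ← Finset.sum_sub_distrib]
      refine Finset.sum_congr rfl fun i _ => ?_
      rw [← Finset.sum_neg_distrib, ← Finset.sum_sub_distrib]
      exact Finset.sum_congr rfl fun j _ => by simp only [hA']; ring
    have f4 : ∑ i, (S.step m w).p i x * (y i - x i)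
        = ∑ i, (y i - x i) * tavg m w S.L (S.p i) x :=
      Finset.sum_congr rfl fun i _ => mul_comm _ _
    rw [f3, f4]; ring
  rw [e5] at low2
  have e6 : ∑ i, ∑ j, A i j * ((S.step m w).Q i j x
      + m * ((S.step m w).p i x * (S.step m w).p j x))
      = ∑ i, ∑ j, A i j * tavg m w S.L (B i j) x := by
    refine Finset.sum_congr rfl fun i _ => Finset.sum_congr rfl fun j _ => ?_
    congr 1
    simp only [GState.step]; rw [sub_add_cancel]
  rw [e6]
  have hJ' : (S.step m w).L x + (∫ z, Real.exp (m * S.L (x + z • w)) *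
        (S'.L (y + z • w') - S.L (x + z • w)) ∂stdGauss) / tZ m w S.L x
      ≤ (S'.step m w').L y := hJ
  linarith

lemma sum_pp_le (hS : S.Good) {A : ι → ι → ℝ} {M : ℝ} (hA : ∀ i j, A i j ≤ M) (x : ι → ℝ) :
    ∑ i, ∑ j, A i j * (S.p i x * S.p j x) ≤ M := by
  calc _ ≤ ∑ i, ∑ j, M * (S.p i x * S.p j x) := by
        refine Finset.sum_le_sum fun i _ => Finset.sum_le_sum fun j _ => ?_
        exact mul_le_mul_of_nonneg_right (hA i j) (mul_nonneg (hS.p_nonneg _ _) (hS.p_nonneg _ _))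
    _ = M * ((∑ i, S.p i x) * ∑ j, S.p j x) := by
        rw [Finset.sum_mul_sum, Finset.mul_sum]
        exact Finset.sum_congr rfl fun i _ => by rw [Finset.mul_sum]
    _ = M := by rw [hS.p_sum]; ring

lemma Low.change (hS : S.Good) {Ls : (ι → ℝ) → ℝ} {A : ι → ι → ℝ} {m0 m v M : ℝ}
    (hm : m0 ≤ m) (hA : ∀ i j, A i j ≤ M) (h : Low Ls S A m v) :
    Low Ls S A m0 (v - (m - m0) * M) := by
  intro x y
  have h1 := h x y
  have h2 := mul_le_mul_of_nonneg_left (sum_pp_le hS hA x) (sub_nonneg.2 hm)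
  have e : ∑ i, ∑ j, A i j * (S.Q i j x + m * (S.p i x * S.p j x))
      = ∑ i, ∑ j, A i j * (S.Q i j x + m0 * (S.p i x * S.p j x))
        + (m - m0) * ∑ i, ∑ j, A i j * (S.p i x * S.p j x) := by
    rw [Finset.mul_sum, ← Finset.sum_add_distrib]
    refine Finset.sum_congr rfl fun i _ => ?_
    rw [Finset.mul_sum, ← Finset.sum_add_distrib]
    exact Finset.sum_congr rfl fun j _ => by ring
  rw [e] at h1
  linarith

/-- The base state: the log-sum-exp function at inverse temperature `β`. -/
def lseState (ι : Type) [Fintype ι] [DecidableEq ι] (β : ℝ) : GState ι where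
  L x := β⁻¹ * Real.log (∑ i, Real.exp (β * x i))
  p i x := Real.exp (β * x i) / ∑ k, Real.exp (β * x k)
  Q i j x := β * ((if i = j then Real.exp (β * x i) / ∑ k, Real.exp (β * x k) else 0)
    - (Real.exp (β * x i) / ∑ k, Real.exp (β * x k)) *
      (Real.exp (β * x j) / ∑ k, Real.exp (β * x k)))

variable [DecidableEq ι] [Nonempty ι]

lemma lse_pos (β : ℝ) (x : ι → ℝ) : 0 < ∑ i, Real.exp (β * x i) :=
  Finset.sum_pos (fun i _ => Real.exp_pos _) Finset.univ_nonempty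

lemma lse_good {β : ℝ} (hβ : 0 < β) : (lseState ι β).Good := by
  have hpn : ∀ i x, 0 ≤ (lseState ι β).p i x := fun i x =>
    div_nonneg (Real.exp_pos _).le (lse_pos β x).le
  have hps : ∀ x, ∑ i, (lseState ι β).p i x = 1 := fun x => by
    simp only [lseState]
    rw [← Finset.sum_div, div_self (lse_pos β x).ne']
  have hp1 : ∀ i x, (lseState ι β).p i x ≤ 1 := fun i x => by
    rw [← hps x]
    exact Finset.single_le_sum (f := fun i => (lseState ι β).p i x) (fun j _ => hpn j x)
      (Finset.mem_univ i)
  have de : ∀ (x v : ι → ℝ) i, HasDerivAt (fun s : ℝ => Real.exp (β * (x + s • v) i))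
      (Real.exp (β * x i) * (β * v i)) 0 := fun x v i => by
    have : HasDerivAt (fun s : ℝ => β * (x i + s * v i)) (β * (1 * v i)) 0 :=
      (((hasDerivAt_id (0 : ℝ)).mul_const (v i)).const_add (x i)).const_mul β
    have := this.exp
    simpa using this
  have dS : ∀ (x v : ι → ℝ), HasDerivAt (fun s : ℝ => ∑ i, Real.exp (β * (x + s • v) i))
      (∑ i, Real.exp (β * x i) * (β * v i)) 0 := fun x v =>
    HasDerivAt.fun_sum fun i _ => de x v i
  refine ⟨hpn, hps, fun x v => ?_, fun i x v => ?_, ⟨|β| * 2, fun i j x => ?_⟩, fun i j => ?_⟩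
  · refine (((dS x v).log (by simpa using (lse_pos β x).ne')).const_mul β⁻¹).congr_deriv ?_
    simp only [zero_smul, add_zero, lseState]
    rw [Finset.sum_div, Finset.mul_sum]
    refine Finset.sum_congr rfl fun i _ => ?_
    field_simp
  · refine ((de x v i).div (dS x v) (by simpa using (lse_pos β x).ne')).congr_deriv ?_
    simp only [zero_smul, add_zero, lseState]
    have hz := (lse_pos β x).ne'
    set Z := ∑ k, Real.exp (β * x k)
    have : ∀ j, β * ((if i = j then Real.exp (β * x i) / Z else 0) -
        Real.exp (β * x i) / Z * (Real.exp (β * x j) / Z)) * v j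
        = (if i = j then β * (Real.exp (β * x i) / Z) * v j else 0)
        - (Real.exp (β * x i) / Z ^ 2) * (Real.exp (β * x j) * (β * v j)) := fun j => by
      split_ifs <;> field_simp <;> ring
    rw [Finset.sum_congr rfl fun j _ => this j, Finset.sum_sub_distrib, Finset.sum_ite_eq,
      if_pos (Finset.mem_univ i), ← Finset.mul_sum]
    field_simp
  · have h1 := hpn i x
    have h2 := hpn j x
    have h3 := hp1 i x
    have h4 := hp1 j x
    show |β * ((if i = j then (lseState ι β).p i x else 0)
      - (lseState ι β).p i x * (lseState ι β).p j x)| ≤ _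
    rw [abs_mul]
    refine mul_le_mul_of_nonneg_left ?_ (abs_nonneg β)
    rw [abs_le]
    constructor <;> split_ifs <;> nlinarith
  · have hz : ∀ x : ι → ℝ, ∑ k, Real.exp (β * x k) ≠ 0 := fun x => (lse_pos β x).ne'
    have hc : ∀ i, Continuous (fun x : ι → ℝ => Real.exp (β * x i) / ∑ k, Real.exp (β * x k)) :=
      fun i => Continuous.div (by fun_prop) (by fun_prop) hz
    simp only [lseState]
    by_cases hij : i = j
    · simp only [if_pos hij]
      exact ((hc i).sub ((hc i).mul (hc j))).const_mul β
    · simp only [if_neg hij]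
      exact (continuous_const.sub ((hc i).mul (hc j))).const_mul β

lemma lse_convex {β : ℝ} (hβ : 0 < β) (x y : ι → ℝ) :
    (lseState ι β).L x + ∑ i, (lseState ι β).p i x * (y i - x i) ≤ (lseState ι β).L y := by
  have hG := lse_good (ι := ι) hβ
  set u := ∑ i, (lseState ι β).p i x * (y i - x i) with hu
  have hZ := lse_pos β x
  have key : Real.exp (β * u) * ∑ i, Real.exp (β * x i) ≤ ∑ i, Real.exp (β * y i) := by
    have e1 : ∀ i, Real.exp (β * y i) =
        (∑ i, Real.exp (β * x i)) * (Real.exp (β * u) * ((lseState ι β).p i x *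
          Real.exp (β * (y i - x i) - β * u))) := fun i => by
      have : Real.exp (β * y i) = Real.exp (β * u) * (Real.exp (β * x i) *
          Real.exp (β * (y i - x i) - β * u)) := by
        rw [← Real.exp_add, ← Real.exp_add]; congr 1; ring
      rw [this]; simp only [lseState]; field_simp
    rw [Finset.sum_congr rfl fun i _ => e1 i, ← Finset.mul_sum, ← Finset.mul_sum,
      mul_comm (Real.exp _)]
    refine mul_le_mul_of_nonneg_left ?_ hZ.le
    refine le_mul_of_one_le_right (Real.exp_pos _).le ?_
    calc (1 : ℝ) = ∑ i, (lseState ι β).p i x * ((β * (y i - x i) - β * u) + 1) := by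
          have : ∀ i, (lseState ι β).p i x * ((β * (y i - x i) - β * u) + 1)
            = β * ((lseState ι β).p i x * (y i - x i)) + (1 - β * u) * (lseState ι β).p i x :=
            fun i => by ring
          rw [Finset.sum_congr rfl fun i _ => this i, Finset.sum_add_distrib, ← Finset.mul_sum,
            ← Finset.mul_sum, hG.p_sum, ← hu]; ring
      _ ≤ _ := Finset.sum_le_sum fun i _ =>
          mul_le_mul_of_nonneg_left (Real.add_one_le_exp _) (hG.p_nonneg i x)
  have h2 := Real.log_le_log (by positivity) key
  rw [Real.log_mul (Real.exp_pos _).ne' hZ.ne', Real.log_exp] at h2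
  have h3 := mul_le_mul_of_nonneg_left h2 (inv_pos.2 hβ).le
  rw [mul_add, inv_mul_cancel_left₀ hβ.ne'] at h3
  simp only [lseState]
  linarith

lemma Low.nil {β : ℝ} (hβ : 0 < β) {A : ι → ι → ℝ} {m0 d M : ℝ} (hm : m0 ≤ β)
    (hd : ∀ i, d ≤ A i i) (hA : ∀ i j, A i j ≤ M) :
    Low (lseState ι β).L (lseState ι β) A m0 (β * d - (β - m0) * M) := by
  have hG := lse_good (ι := ι) hβ
  refine Low.change hG hm hA ?_
  intro x y
  have h1 := lse_convex hβ x y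
  have e : ∑ i, ∑ j, A i j * ((lseState ι β).Q i j x
      + β * ((lseState ι β).p i x * (lseState ι β).p j x))
      = ∑ i, β * (A i i * (lseState ι β).p i x) := by
    refine Finset.sum_congr rfl fun i _ => ?_
    have : ∀ j, A i j * ((lseState ι β).Q i j x
      + β * ((lseState ι β).p i x * (lseState ι β).p j x))
      = if i = j then β * (A i j * (lseState ι β).p i x) else 0 := fun j => by
      simp only [lseState]; split_ifs <;> ring
    rw [Finset.sum_congr rfl fun j _ => this j, Finset.sum_ite_eq, if_pos (Finset.mem_univ i)]
  have e2 : β * d ≤ ∑ i, β * (A i i * (lseState ι β).p i x) := by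
    rw [← Finset.mul_sum]
    refine mul_le_mul_of_nonneg_left ?_ hβ.le
    calc d = ∑ i, d * (lseState ι β).p i x := by rw [← Finset.mul_sum, hG.p_sum, mul_one]
      _ ≤ _ := Finset.sum_le_sum fun i _ =>
        mul_le_mul_of_nonneg_right (hd i) (hG.p_nonneg i x)
  rw [e]
  linarith

end Frozen

section Blocks
variable {ι : Type} [Fintype ι] {κ : Type}

/-- A block of Parisi steps with common parameter `m` and amplitude `c`. -/
def blk (m c : ℝ) (b : κ → ι → ℝ) (S : GState ι) : List κ → GState ι
  | [] => S
  | k :: l => (blk m c b S l).step m (c • b k)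

lemma blk_good {S : GState ι} (hS : S.Good) (m c : ℝ) (b : κ → ι → ℝ) (l : List κ) :
    (blk m c b S l).Good := by
  induction l with
  | nil => exact hS
  | cons k l ih => exact ih.step m _

lemma blk_low {S S' : GState ι} (hS : S.Good) (hS' : S'.Good) {m : ℝ} (hm : 0 ≤ m)
    (b : κ → ι → ℝ) (ct cs v : ℝ) (l : List κ) (A : ι → ι → ℝ)
    (h : Low S'.L S (fun i j => A i j + (cs - ct) * ct * (l.map fun k => b k i * b k j).sum) m v) :
    Low (blk m cs b S' l).L (blk m ct b S l) A m v := by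
  induction l generalizing A with
  | nil => simpa [blk] using h
  | cons k l ih =>
    refine Low.cons (blk_good hS m ct b l) (blk_good hS' m cs b l) hm (b k) ct cs ?_
    refine ih _ ?_
    convert h using 3
    simp only [List.map_cons, List.sum_cons]
    ring

lemma blk_zero {S : GState ι} (m : ℝ) (b : κ → ι → ℝ) (l : List κ) (x : ι → ℝ) :
    (blk m 0 b S l).L x = S.L x := by
  induction l with
  | nil => rfl
  | cons k l ih =>
    simp only [blk, GState.step, tStep, tZ, zero_smul, smul_zero, add_zero]
    rw [ih]
    split_ifs with hm
    · simp
    · simp [hm]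

end Blocks

lemma spin_mul_self (b : Bool) : spin b * spin b = 1 := by cases b <;> simp [spin]
lemma abs_spin (b : Bool) : |spin b| = 1 := by cases b <;> simp [spin]

section Model
variable (N : ℕ)

/-- SK directions. -/
def bSK (k : Fin N × Fin N) (σ : Fin N → Bool) : ℝ :=
  if k.1 < k.2 then (1 / Real.sqrt N) * (spin (σ k.1) * spin (σ k.2)) else 0

/-- Field directions. -/
def bF (s : ℝ) (i : Fin N) (σ : Fin N → Bool) : ℝ := Real.sqrt s * spin (σ i)

/-- The field part of the interpolating system. -/
def fsys (β : ℝ) (K : ℕ) (q m : ℕ → ℝ) (c : ℝ) : ℕ → GState (Fin N → Bool)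
  | 0 => lseState (Fin N → Bool) β
  | j + 1 => blk (m (K - j)) c (bF N (q (K - j) - q (K - j - 1))) (fsys β K q m c j)
      (Finset.univ : Finset (Fin N)).toList

/-- The interpolating system. -/
def isys (β : ℝ) (K : ℕ) (q m : ℕ → ℝ) (θ : ℝ) : GState (Fin N → Bool) :=
  blk 0 (Real.cos θ) (bSK N) (fsys N β K q m (Real.sin θ) K)
    (Finset.univ : Finset (Fin N × Fin N)).toList

variable {N}

lemma fsys_good {β : ℝ} (hβ : 0 < β) (K : ℕ) (q m : ℕ → ℝ) (c : ℝ) (j : ℕ) :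
    (fsys N β K q m c j).Good := by
  induction j with
  | zero => exact lse_good hβ
  | succ j ih => exact blk_good ih _ _ _ _

/-- Cumulative overlap sum. -/
def ovs (σ τ : Fin N → Bool) : ℝ := ∑ i, spin (σ i) * spin (τ i)

lemma ovs_self (σ : Fin N → Bool) : ovs σ σ = N := by
  simp [ovs, spin_mul_self]

lemma abs_ovs (σ τ : Fin N → Bool) : |ovs σ τ| ≤ N := by
  unfold ovs
  refine (Finset.abs_sum_le_sum_abs _ _).trans ?_
  simp [abs_mul, abs_spin]

lemma sk_cov (hN : 1 ≤ N) (σ τ : Fin N → Bool) :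
    ∑ k, bSK N k σ * bSK N k τ = ((N : ℝ)⁻¹ * ovs σ τ ^ 2 - 1) / 2 := by
  have hN' : (0 : ℝ) < N := by exact_mod_cast hN
  set a : Fin N → ℝ := fun i => spin (σ i) * spin (τ i) with ha
  have haa : ∀ i, a i * a i = 1 := fun i => by
    simp only [ha]
    linear_combination (spin_mul_self (σ i)) * (spin (τ i) * spin (τ i)) + spin_mul_self (τ i)
  have h1 : ∀ k : Fin N × Fin N, bSK N k σ * bSK N k τ =
      (N : ℝ)⁻¹ * (if k.1 < k.2 then a k.1 * a k.2 else 0) := fun k => by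
    unfold bSK
    have : (1 / Real.sqrt N) * (1 / Real.sqrt N) = (N : ℝ)⁻¹ := by
      rw [div_mul_div_comm, Real.mul_self_sqrt hN'.le]; simp
    split_ifs
    · rw [← this]; simp only [ha]; ring
    · simp
  rw [Finset.sum_congr rfl fun k _ => h1 k, ← Finset.mul_sum, Fintype.sum_prod_type]
  have h2 : ∑ i, ∑ j, a i * a j = ∑ i, ∑ j, (if i < j then a i * a j else 0)
      + ∑ i, ∑ j, (if j < i then a i * a j else 0) + ∑ i, ∑ j, (if i = j then a i * a j else 0) := by
    rw [← Finset.sum_add_distrib, ← Finset.sum_add_distrib]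
    refine Finset.sum_congr rfl fun i _ => ?_
    rw [← Finset.sum_add_distrib, ← Finset.sum_add_distrib]
    refine Finset.sum_congr rfl fun j _ => ?_
    rcases lt_trichotomy i j with h | h | h
    · simp [h, h.not_gt, h.ne]
    · simp [h]
    · simp [h, h.not_gt, h.ne']
  have h3 : ∑ i, ∑ j, (if j < i then a i * a j else 0)
      = ∑ i, ∑ j, (if i < j then a i * a j else 0) := by
    rw [Finset.sum_comm]
    refine Finset.sum_congr rfl fun i _ => Finset.sum_congr rfl fun j _ => ?_
    rw [mul_comm]
  have h4 : ∑ i, ∑ j, (if i = j then a i * a j else 0) = (N : ℝ) := by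
    simp [haa]
  have h5 : ∑ i, ∑ j, a i * a j = ovs σ τ ^ 2 := by
    rw [sq, ovs, Finset.sum_mul_sum]
  rw [h3, h4, h5] at h2
  have : ∑ i, ∑ j, (if i < j then a i * a j else 0) = (ovs σ τ ^ 2 - N) / 2 := by linarith
  rw [this]
  field_simp

lemma f_cov {s : ℝ} (hs : 0 ≤ s) (σ τ : Fin N → Bool) :
    ∑ i, bF N s i σ * bF N s i τ = s * ovs σ τ := by
  unfold bF ovs
  rw [Finset.mul_sum]
  refine Finset.sum_congr rfl fun i _ => ?_
  linear_combination (Real.mul_self_sqrt hs) * (spin (σ i) * spin (τ i))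

/-- Cumulative covariance matrix. -/
def Acum (us uf q : ℝ) (σ τ : Fin N → Bool) : ℝ :=
  us * (((N : ℝ)⁻¹ * ovs σ τ ^ 2 - 1) / 2) + uf * (q * ovs σ τ)

/-- The trig amplitudes. -/
lemma trig_bd (s t : ℝ) : (Real.cos s - Real.cos t) ^ 2 ≤ (s - t) ^ 2 ∧
    (Real.sin s - Real.sin t) ^ 2 ≤ (s - t) ^ 2 := by
  constructor
  · apply sq_le_sq.2
    have := Real.lipschitzWith_cos.dist_le_mul s t
    simpa [Real.dist_eq] using this
  · apply sq_le_sq.2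
    have := Real.lipschitzWith_sin.dist_le_mul s t
    simpa [Real.dist_eq] using this

lemma Acum_bounds (hN : 1 ≤ N) (s t : ℝ) (hδ : 0 ≤ Real.sin s ^ 2 - Real.sin t ^ 2)
    {q : ℝ} (hq0 : 0 ≤ q) (hq1 : q ≤ 1) (σ τ : Fin N → Bool) :
    Acum ((Real.cos s - Real.cos t) * Real.cos t) ((Real.sin s - Real.sin t) * Real.sin t) q σ τ
      ≤ (Real.sin s ^ 2 - Real.sin t ^ 2) / 4 * (1 + N * q ^ 2) + 2 * N * (s - t) ^ 2 ∧
    (Real.sin s ^ 2 - Real.sin t ^ 2) / 4 * (1 + N) - 2 * N * (s - t) ^ 2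
      ≤ Acum ((Real.cos s - Real.cos t) * Real.cos t)
        ((Real.sin s - Real.sin t) * Real.sin t) 1 σ σ := by
  have hN' : (1 : ℝ) ≤ N := by exact_mod_cast hN
  obtain ⟨b1, b2⟩ := trig_bd s t
  have hus : (Real.cos s - Real.cos t) * Real.cos t =
      -(Real.sin s ^ 2 - Real.sin t ^ 2) / 2 - (Real.cos s - Real.cos t) ^ 2 / 2 := by
    linear_combination (Real.sin_sq_add_cos_sq s) / 2 - (Real.sin_sq_add_cos_sq t) / 2
  have huf : (Real.sin s - Real.sin t) * Real.sin t =
      (Real.sin s ^ 2 - Real.sin t ^ 2) / 2 - (Real.sin s - Real.sin t) ^ 2 / 2 := by ring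
  rw [hus, huf]
  set δ := Real.sin s ^ 2 - Real.sin t ^ 2
  set e1 := (Real.cos s - Real.cos t) ^ 2 with he1
  set e2 := (Real.sin s - Real.sin t) ^ 2 with he2
  have h1 : 0 ≤ e1 := sq_nonneg _
  have h2 : 0 ≤ e2 := sq_nonneg _
  set D := (s - t) ^ 2
  unfold Acum
  constructor
  · obtain ⟨R, hR⟩ : ∃ R, ovs σ τ = N * R := ⟨(N : ℝ)⁻¹ * ovs σ τ, by field_simp⟩
    have hR1 : |R| ≤ 1 := by
      have := abs_ovs σ τ
      rw [hR, abs_mul, Nat.abs_cast] at this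
      nlinarith
    rw [hR]
    have e : (N : ℝ)⁻¹ * (N * R) ^ 2 = N * R ^ 2 := by field_simp
    rw [e]
    have hqR : -(q * R) ≤ 1 := by
      refine (neg_le_abs _).trans ?_
      rw [abs_mul, abs_of_nonneg hq0]
      exact mul_le_one₀ hq1 (abs_nonneg _) hR1
    have k1 : 0 ≤ δ * (N * (R - q) ^ 2) := by positivity
    have k2 : 0 ≤ e1 * (N * R ^ 2) := by positivity
    have k3 : e2 * N * (-(q * R)) ≤ D * N * 1 := by
      have : e2 * N * (-(q * R)) ≤ e2 * N * 1 := mul_le_mul_of_nonneg_left hqR (by positivity)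
      nlinarith
    have k4 : e1 ≤ D * N := by nlinarith
    nlinarith
  · rw [ovs_self]
    have e : (N : ℝ)⁻¹ * (N : ℝ) ^ 2 = N := by field_simp
    rw [e]
    have k1 : e1 * N ≤ D * N := by nlinarith
    have k2 : e2 * N ≤ D * N := by nlinarith
    nlinarith

lemma q_mono_le {K : ℕ} {q : ℕ → ℝ} (hq : ∀ a, a < K → q a ≤ q (a + 1)) {a b : ℕ}
    (hab : a ≤ b) (hb : b ≤ K) : q a ≤ q b := by
  induction b, hab using Nat.le_induction with
  | base => exact le_rfl
  | succ b hab ih => exact (ih (by omega)).trans (hq b (by omega))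

variable {K : ℕ} {q m : ℕ → ℝ}

/-- The sum `∑ m_a (q_a² - q_{a-1}²)` from the top. -/
def Tsum (K : ℕ) (q m : ℕ → ℝ) (j : ℕ) : ℝ :=
  ∑ i ∈ Finset.range j, m (K - i) * (q (K - i) ^ 2 - q (K - i - 1) ^ 2)

lemma fsys_low (hN : 1 ≤ N) {β : ℝ} (hβ : 0 < β) (hq0 : q 0 = 0) (hqK : q K = 1)
    (hq : ∀ a, a < K → q a ≤ q (a + 1)) (hm0 : 0 ≤ m 0) (hm : ∀ a, a < K → m a ≤ m (a + 1))
    (hmβ : m K ≤ β) (s t : ℝ) (hδ : 0 ≤ Real.sin s ^ 2 - Real.sin t ^ 2) (j : ℕ) (hj : j ≤ K) :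
    Low (fsys N β K q m (Real.sin s) j).L (fsys N β K q m (Real.sin t) j)
      (Acum ((Real.cos s - Real.cos t) * Real.cos t) ((Real.sin s - Real.sin t) * Real.sin t)
        (q (K - j))) (m (K - j))
      ((Real.sin s ^ 2 - Real.sin t ^ 2) / 4 *
        (m (K - j) + N * (m (K - j) * q (K - j) ^ 2 + Tsum K q m j))
        - (2 * β - m (K - j)) * (2 * N * (s - t) ^ 2)) := by
  have hqn : ∀ a, a ≤ K → 0 ≤ q a := fun a ha => hq0 ▸ q_mono_le hq (Nat.zero_le a) ha
  have hq1 : ∀ a, a ≤ K → q a ≤ 1 := fun a ha => hqK ▸ q_mono_le hq ha le_rfl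
  have hmn : ∀ a, a ≤ K → 0 ≤ m a := fun a ha => hm0.trans (q_mono_le hm (Nat.zero_le a) ha)
  induction j with
  | zero =>
    have h := Low.nil (ι := Fin N → Bool) hβ hmβ
      (A := Acum ((Real.cos s - Real.cos t) * Real.cos t)
        ((Real.sin s - Real.sin t) * Real.sin t) (q K))
      (fun σ => by
        rw [hqK]
        exact (Acum_bounds hN s t hδ (hqn K le_rfl) (hq1 K le_rfl) σ σ).2)
      (fun σ τ => (Acum_bounds hN s t hδ (hqn K le_rfl) (hq1 K le_rfl) σ τ).1)
    simp only [Nat.sub_zero, fsys]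
    convert h using 1
    simp only [Tsum, Finset.range_zero, Finset.sum_empty, hqK]
    ring
  | succ j ih =>
    have ih := ih (by omega)
    obtain ⟨a, ha⟩ : ∃ a, K - j = a + 1 := ⟨K - j - 1, by omega⟩
    have ha' : K - (j + 1) = a := by omega
    have ha2 : K - j - 1 = a := by omega
    have hT : Tsum K q m (j + 1) = Tsum K q m j + m (a + 1) * (q (a + 1) ^ 2 - q a ^ 2) := by
      rw [Tsum, Finset.sum_range_succ, ← Tsum, ha2, ha]
    rw [ha] at ih
    rw [ha', hT]
    have hlow := blk_low (fsys_good (N := N) hβ K q m (Real.sin t) j)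
      (fsys_good (N := N) hβ K q m (Real.sin s) j) (hmn (a + 1) (by omega))
      (bF N (q (a + 1) - q a)) (Real.sin t) (Real.sin s) _
      (Finset.univ : Finset (Fin N)).toList
      (Acum ((Real.cos s - Real.cos t) * Real.cos t)
        ((Real.sin s - Real.sin t) * Real.sin t) (q a)) (by
        convert ih using 3
        rw [Finset.sum_map_toList, f_cov (by linarith [hq a (by omega)])]
        unfold Acum
        ring)
    have hlow2 := Low.change (blk_good (fsys_good (N := N) hβ K q m (Real.sin t) j) _ _ _ _)
      (hm a (by omega)) (fun σ τ => (Acum_bounds hN s t hδ (hqn a (by omega))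
        (hq1 a (by omega)) σ τ).1) hlow
    have e : ∀ c, fsys N β K q m c (j + 1) = blk (m (a + 1)) c (bF N (q (a + 1) - q a))
        (fsys N β K q m c j) (Finset.univ : Finset (Fin N)).toList := fun c => by
      rw [fsys, ha2, ha]
    rw [e, e]
    convert hlow2 using 1
    ring

lemma isys_step (hN : 1 ≤ N) {β : ℝ} (hβ : 0 < β) (hq0 : q 0 = 0) (hqK : q K = 1)
    (hq : ∀ a, a < K → q a ≤ q (a + 1)) (hm0 : m 0 = 0) (hm : ∀ a, a < K → m a ≤ m (a + 1))
    (hmβ : m K ≤ β) (s t : ℝ) (hδ : 0 ≤ Real.sin s ^ 2 - Real.sin t ^ 2) (x) :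
    (isys N β K q m t).L x + (Real.sin s ^ 2 - Real.sin t ^ 2) * (N / 4 * Tsum K q m K)
      - 4 * β * N * (s - t) ^ 2 ≤ (isys N β K q m s).L x := by
  have h := fsys_low hN hβ hq0 hqK hq hm0.ge hm hmβ s t hδ K le_rfl
  simp only [Nat.sub_self, hm0, hq0] at h
  have h2 := blk_low (fsys_good (N := N) hβ K q m (Real.sin t) K)
      (fsys_good (N := N) hβ K q m (Real.sin s) K) le_rfl
      (bSK N) (Real.cos t) (Real.cos s) _
      (Finset.univ : Finset (Fin N × Fin N)).toList (fun _ _ => 0) (by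
        convert h using 3
        rw [Finset.sum_map_toList, sk_cov hN]
        unfold Acum
        ring) x x
  simp only [sub_self, mul_zero, zero_mul, Finset.sum_const_zero, add_zero, sub_zero] at h2
  unfold isys
  linarith

lemma isys_total (hN : 1 ≤ N) {β : ℝ} (hβ : 0 < β) (hq0 : q 0 = 0) (hqK : q K = 1)
    (hq : ∀ a, a < K → q a ≤ q (a + 1)) (hm0 : m 0 = 0) (hm : ∀ a, a < K → m a ≤ m (a + 1))
    (hmβ : m K ≤ β) (x) :
    (isys N β K q m 0).L x + N / 4 * Tsum K q m K ≤ (isys N β K q m (Real.pi / 2)).L x := by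
  have key : ∀ n : ℕ, 0 < n → (isys N β K q m 0).L x + N / 4 * Tsum K q m K
      - 4 * β * N * (Real.pi / 2) ^ 2 * (n : ℝ)⁻¹ ≤ (isys N β K q m (Real.pi / 2)).L x := by
    intro n hn
    have hn' : (0 : ℝ) < n := by exact_mod_cast hn
    have hind : ∀ k : ℕ, k ≤ n → (isys N β K q m 0).L x
        + Real.sin (k * (Real.pi / 2 / n)) ^ 2 * (N / 4 * Tsum K q m K)
        - k * (4 * β * N * (Real.pi / 2 / n) ^ 2) ≤ (isys N β K q m (k * (Real.pi / 2 / n))).L x := by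
      intro k
      induction k with
      | zero => intro _; simp
      | succ k ih =>
        intro hk
        have ih := ih (by omega)
        have hpos : 0 < Real.pi / 2 / n := by positivity
        have hmono : Real.sin (k * (Real.pi / 2 / n)) ≤
            Real.sin ((k + 1 : ℕ) * (Real.pi / 2 / n)) := by
          apply Real.sin_le_sin_of_le_of_le_pi_div_two
          · have : 0 ≤ k * (Real.pi / 2 / n) := by positivity
            linarith [Real.pi_pos]
          · rw [show Real.pi / 2 = n * (Real.pi / 2 / n) by field_simp]
            have : ((k + 1 : ℕ) : ℝ) ≤ n := by exact_mod_cast hk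
            rw [show ((n : ℝ) * (Real.pi / 2 / n)) / n = Real.pi / 2 / n by field_simp]
            exact mul_le_mul_of_nonneg_right this hpos.le
          · push_cast
            nlinarith
        have hsin0 : 0 ≤ Real.sin (k * (Real.pi / 2 / n)) := by
          apply Real.sin_nonneg_of_nonneg_of_le_pi (by positivity)
          have : (k : ℝ) ≤ n := by exact_mod_cast (by omega : k ≤ n)
          have : k * (Real.pi / 2 / n) ≤ n * (Real.pi / 2 / n) :=
            mul_le_mul_of_nonneg_right this hpos.le
          rw [show (n : ℝ) * (Real.pi / 2 / n) = Real.pi / 2 by field_simp] at this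
          linarith [Real.pi_pos]
        have h := isys_step hN hβ hq0 hqK hq hm0 hm hmβ ((k + 1 : ℕ) * (Real.pi / 2 / n))
          (k * (Real.pi / 2 / n)) (by nlinarith) x
        rw [show ((k + 1 : ℕ) : ℝ) * (Real.pi / 2 / n) - k * (Real.pi / 2 / n) = Real.pi / 2 / n by
          push_cast; ring] at h
        have e : ((k + 1 : ℕ) : ℝ) * (4 * β * N * (Real.pi / 2 / n) ^ 2) =
            k * (4 * β * N * (Real.pi / 2 / n) ^ 2) + 4 * β * N * (Real.pi / 2 / n) ^ 2 := by
          push_cast; ring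
        rw [e]
        linarith
    have := hind n le_rfl
    rw [show (n : ℝ) * (Real.pi / 2 / n) = Real.pi / 2 by field_simp, Real.sin_pi_div_two] at this
    have e : (n : ℝ) * (4 * β * N * (Real.pi / 2 / n) ^ 2) =
        4 * β * N * (Real.pi / 2) ^ 2 * (n : ℝ)⁻¹ := by field_simp
    rw [e] at this
    linarith
  have hlim : Tendsto (fun n : ℕ => (isys N β K q m 0).L x + N / 4 * Tsum K q m K
      - 4 * β * N * (Real.pi / 2) ^ 2 * (n : ℝ)⁻¹) atTop
      (nhds ((isys N β K q m 0).L x + N / 4 * Tsum K q m K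
      - 4 * β * N * (Real.pi / 2) ^ 2 * 0)) :=
    (tendsto_inv_atTop_nhds_zero_nat.const_mul _).const_sub _
  rw [mul_zero, sub_zero] at hlim
  exact le_of_tendsto hlim (eventually_atTop.2 ⟨1, fun n hn => key n hn⟩)

end Model

/-- One-Lipschitz real functions. -/
def Lip1 (g : ℝ → ℝ) : Prop := ∀ x y, |g x - g y| ≤ |x - y|

lemma Lip1.cont {g : ℝ → ℝ} (hg : Lip1 g) : Continuous g := by
  have : LipschitzWith 1 g := LipschitzWith.of_dist_le_mul fun x y => by
    simpa [Real.dist_eq] using hg x y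
  exact this.continuous

lemma Lip1.growth {g : ℝ → ℝ} (hg : Lip1 g) (y a z : ℝ) : |g (y + z * a)| ≤ |g y| + |a| * |z| := by
  have h1 := hg (y + z * a) y
  have h2 := abs_sub_abs_le_abs_sub (g (y + z * a)) (g y)
  rw [add_sub_cancel_left, abs_mul] at h1
  linarith

lemma Lip1.int {g : ℝ → ℝ} (hg : Lip1 g) (y a : ℝ) :
    Integrable (fun z => g (y + z * a)) stdGauss := by
  refine integrable_of_growth (hg.cont.comp (by fun_prop)) (|g y| + |a|) 1 fun z => ?_
  refine (hg.growth y a z).trans ?_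
  have h1 : 1 ≤ Real.exp (1 * |z|) := Real.one_le_exp (by positivity)
  have h2 := abs_le_exp_abs z
  rw [one_mul] at h1 ⊢
  nlinarith [abs_nonneg (g y), abs_nonneg a]

lemma Lip1.intE {g : ℝ → ℝ} (hg : Lip1 g) (m y a : ℝ) :
    Integrable (fun z => Real.exp (m * g (y + z * a))) stdGauss := by
  have hc : Continuous fun z : ℝ => g (y + z * a) := hg.cont.comp (by fun_prop)
  refine integrable_of_growth (Real.continuous_exp.comp (continuous_const.mul hc)) (Real.exp (|m| * |g y|)) (|m| * |a|) fun z => ?_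
  rw [abs_of_pos (Real.exp_pos _), ← Real.exp_add]
  apply Real.exp_le_exp.2
  calc m * g (y + z * a) ≤ |m| * |g (y + z * a)| := by rw [← abs_mul]; exact le_abs_self _
    _ ≤ |m| * (|g y| + |a| * |z|) := mul_le_mul_of_nonneg_left (hg.growth y a z) (abs_nonneg _)
    _ = _ := by ring

lemma pStep_mono {m : ℝ} (hm : 0 ≤ m) (s : ℝ) {g1 g2 : ℝ → ℝ} (h1 : Lip1 g1) (h2 : Lip1 g2)
    {y1 y2 c : ℝ} (h : ∀ z, g1 (y1 + z * Real.sqrt s) ≤ g2 (y2 + z * Real.sqrt s) + c) :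
    pStep m s g1 y1 ≤ pStep m s g2 y2 + c := by
  unfold pStep
  split_ifs with h0
  · have := integral_mono (h1.int y1 (Real.sqrt s))
      ((h2.int y2 (Real.sqrt s)).add (integrable_const c)) h
    refine this.trans_eq ?_
    rw [integral_add' (h2.int y2 (Real.sqrt s)) (integrable_const c)]
    simp
  · have hm' : 0 < m := lt_of_le_of_ne hm (Ne.symm h0)
    have hp1 := integral_exp_pos (h1.intE m y1 (Real.sqrt s))
    have hp2 := integral_exp_pos (h2.intE m y2 (Real.sqrt s))
    have key : ∫ z, Real.exp (m * g1 (y1 + z * Real.sqrt s)) ∂stdGauss ≤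
        Real.exp (m * c) * ∫ z, Real.exp (m * g2 (y2 + z * Real.sqrt s)) ∂stdGauss := by
      rw [← integral_const_mul]
      refine integral_mono (h1.intE m y1 _) ((h2.intE m y2 _).const_mul _) fun z => ?_
      simp only
      rw [← Real.exp_add]
      apply Real.exp_le_exp.2
      nlinarith [h z]
    have := Real.log_le_log hp1 key
    rw [Real.log_mul (Real.exp_ne_zero _) hp2.ne', Real.log_exp] at this
    have h3 := mul_le_mul_of_nonneg_left this (inv_nonneg.2 hm)
    rw [mul_add, inv_mul_cancel_left₀ h0] at h3
    linarith

lemma Lip1.pStep {m : ℝ} (hm : 0 ≤ m) (s : ℝ) {g : ℝ → ℝ} (hg : Lip1 g) :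
    Lip1 (pStep m s g) := by
  have key : ∀ x y, _root_.pStep m s g x ≤ _root_.pStep m s g y + |x - y| := fun x y =>
    pStep_mono hm s hg hg fun z => by
      have := (abs_le.1 (hg (x + z * Real.sqrt s) (y + z * Real.sqrt s))).2
      rw [add_sub_add_right_eq_sub] at this
      linarith
  intro x y
  rw [abs_le]
  have h1 := key x y
  have h2 := key y x
  rw [abs_sub_comm] at h2
  constructor <;> linarith

lemma Lip1.add_const {g : ℝ → ℝ} (hg : Lip1 g) (c : ℝ) : Lip1 (fun y => g y + c) := fun x y => by
  simpa using hg x y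

lemma pStep_add_const {m : ℝ} (hm : 0 ≤ m) (s : ℝ) {g : ℝ → ℝ} (hg : Lip1 g) (c y : ℝ) :
    pStep m s (fun y => g y + c) y = pStep m s g y + c := by
  apply le_antisymm
  · exact pStep_mono hm s (hg.add_const c) hg fun z => le_rfl
  · have := pStep_mono hm s (y1 := y) (y2 := y) (c := -c) hg (hg.add_const c) fun z => by simp
    linarith

/-- The positive temperature Parisi recursion, normalized. -/
def gl (β : ℝ) (K : ℕ) (q m : ℕ → ℝ) : ℕ → ℝ → ℝ
  | 0 => fun y => β⁻¹ * Real.log (Real.exp (β * y) + Real.exp (-(β * y)))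
  | j + 1 => pStep (m (K - j)) (q (K - j) - q (K - j - 1)) (gl β K q m j)

lemma gl0_lip {β : ℝ} (hβ : 0 < β) :
    Lip1 (fun y => β⁻¹ * Real.log (Real.exp (β * y) + Real.exp (-(β * y)))) := by
  have key : ∀ x y : ℝ, β⁻¹ * Real.log (Real.exp (β * x) + Real.exp (-(β * x))) ≤
      β⁻¹ * Real.log (Real.exp (β * y) + Real.exp (-(β * y))) + |x - y| := fun x y => by
    have hle : Real.exp (β * x) + Real.exp (-(β * x)) ≤
        Real.exp (β * |x - y|) * (Real.exp (β * y) + Real.exp (-(β * y))) := by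
      rw [mul_add, ← Real.exp_add, ← Real.exp_add]
      refine add_le_add (Real.exp_le_exp.2 ?_) (Real.exp_le_exp.2 ?_)
      · nlinarith [le_abs_self (x - y)]
      · nlinarith [neg_abs_le (x - y)]
    have := Real.log_le_log (by positivity) hle
    rw [Real.log_mul (Real.exp_ne_zero _) (by positivity), Real.log_exp] at this
    have h3 := mul_le_mul_of_nonneg_left this (inv_nonneg.2 hβ.le)
    rw [mul_add, inv_mul_cancel_left₀ hβ.ne'] at h3
    linarith
  intro x y
  rw [abs_le]
  have h1 := key x y
  have h2 := key y x
  rw [abs_sub_comm] at h2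
  constructor <;> linarith

lemma gl0_le {β : ℝ} (hβ : 0 < β) (y : ℝ) :
    β⁻¹ * Real.log (Real.exp (β * y) + Real.exp (-(β * y))) ≤ |y| + Real.log 2 / β := by
  have hle : Real.exp (β * y) + Real.exp (-(β * y)) ≤ Real.exp (β * |y|) * 2 := by
    have h1 : Real.exp (β * y) ≤ Real.exp (β * |y|) :=
      Real.exp_le_exp.2 (by nlinarith [le_abs_self y])
    have h2 : Real.exp (-(β * y)) ≤ Real.exp (β * |y|) :=
      Real.exp_le_exp.2 (by nlinarith [neg_abs_le y])
    linarith
  have := Real.log_le_log (by positivity) hle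
  rw [Real.log_mul (Real.exp_ne_zero _) (by positivity), Real.log_exp] at this
  have h3 := mul_le_mul_of_nonneg_left this (inv_nonneg.2 hβ.le)
  rw [mul_add, inv_mul_cancel_left₀ hβ.ne', inv_mul_eq_div] at h3
  rwa [inv_mul_eq_div] at h3 ⊢

section
variable {K : ℕ} {q m : ℕ → ℝ}

lemma gl_lip {β : ℝ} (hβ : 0 < β) (hm : ∀ a, 1 ≤ a → a ≤ K → 0 ≤ m a) (j : ℕ) (hj : j ≤ K) :
    Lip1 (gl β K q m j) := by
  induction j with
  | zero => exact gl0_lip hβ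
  | succ j ih => exact (ih (by omega)).pStep (hm _ (by omega) (by omega)) _

lemma bar_lip (hm : ∀ a, 1 ≤ a → a ≤ K → 0 ≤ m a) (j : ℕ) (hj : j ≤ K) :
    Lip1 (parisiLevelBar K q m j) := by
  induction j with
  | zero => exact fun x y => abs_abs_sub_abs_le x y
  | succ j ih => exact (ih (by omega)).pStep (hm _ (by omega) (by omega)) _

lemma gl_le {β : ℝ} (hβ : 0 < β) (hm : ∀ a, 1 ≤ a → a ≤ K → 0 ≤ m a) (j : ℕ) (hj : j ≤ K)
    (y : ℝ) : gl β K q m j y ≤ parisiLevelBar K q m j y + Real.log 2 / β := by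
  induction j generalizing y with
  | zero => exact gl0_le hβ y
  | succ j ih =>
    exact pStep_mono (hm _ (by omega) (by omega)) _ (gl_lip hβ hm j (by omega))
      (bar_lip hm j (by omega)) fun z => ih (by omega) _

/-- The configuration vector of a field. -/
def fld {N : ℕ} (y : Fin N → ℝ) (σ : Fin N → Bool) : ℝ := ∑ i, y i * spin (σ i)

variable {N : ℕ}

lemma fld_shift (y : Fin N → ℝ) (k : Fin N) (z s : ℝ) :
    fld y + z • ((1 : ℝ) • bF N s k) = fld (Function.update y k (y k + z * Real.sqrt s)) := by
  ext σ
  simp only [fld, bF, Pi.add_apply, Pi.smul_apply, one_smul, smul_eq_mul]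
  rw [← Finset.add_sum_erase _ _ (Finset.mem_univ k),
    ← Finset.add_sum_erase _ (fun i => Function.update y k (y k + z * Real.sqrt s) i * spin (σ i))
      (Finset.mem_univ k), Function.update_self]
  have : ∑ i ∈ Finset.univ.erase k, Function.update y k (y k + z * Real.sqrt s) i * spin (σ i)
      = ∑ i ∈ Finset.univ.erase k, y i * spin (σ i) :=
    Finset.sum_congr rfl fun i hi => by
      rw [Function.update_of_ne (Finset.ne_of_mem_erase hi)]
  rw [this]
  ring

lemma blk_fld {S : GState (Fin N → Bool)} {g : ℝ → ℝ} (hg : Lip1 g)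
    (hS : ∀ y, S.L (fld y) = ∑ i, g (y i)) {m : ℝ} (hm : 0 ≤ m) (s : ℝ) (l : List (Fin N))
    (hl : l.Nodup) (y : Fin N → ℝ) :
    (blk m 1 (bF N s) S l).L (fld y) = ∑ i, if i ∈ l then pStep m s g (y i) else g (y i) := by
  induction l generalizing y with
  | nil => simpa [blk] using hS y
  | cons k l ih =>
    have hk := (List.nodup_cons.1 hl).1
    have ih := ih (List.nodup_cons.1 hl).2
    set C := ∑ i ∈ Finset.univ.erase k, (if i ∈ l then pStep m s g (y i) else g (y i)) with hC
    have h1 : ∀ z, (blk m 1 (bF N s) S l).L (fld y + z • ((1 : ℝ) • bF N s k)) =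
        (fun w => g w + C) (y k + z * Real.sqrt s) := fun z => by
      rw [fld_shift, ih, ← Finset.add_sum_erase _ _ (Finset.mem_univ k), if_neg hk,
        Function.update_self]
      simp only [hC]
      congr 1
      exact Finset.sum_congr rfl fun i hi => by
        rw [Function.update_of_ne (Finset.ne_of_mem_erase hi)]
    have h2 : (blk m 1 (bF N s) S (k :: l)).L (fld y) = pStep m s (fun w => g w + C) (y k) := by
      simp only [blk, GState.step, tStep, tZ, pStep, h1]
    rw [h2, pStep_add_const hm s hg, ← Finset.add_sum_erase _ _ (Finset.mem_univ k)]
    simp only [List.mem_cons, true_or, if_true, hC]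
    congr 1
    refine Finset.sum_congr rfl fun i hi => ?_
    simp [Finset.ne_of_mem_erase hi]

lemma lse_fld (β : ℝ) (y : Fin N → ℝ) :
    (lseState (Fin N → Bool) β).L (fld y) =
      ∑ i, β⁻¹ * Real.log (Real.exp (β * y i) + Real.exp (-(β * y i))) := by
  simp only [lseState]
  rw [← Finset.mul_sum, ← Real.log_prod (fun i _ => by positivity)]
  congr 2
  have h1 : ∀ i, Real.exp (β * y i) + Real.exp (-(β * y i)) =
      ∑ b : Bool, Real.exp (β * (y i * spin b)) := fun i => by simp [spin]
  rw [Finset.prod_congr rfl fun i _ => h1 i, Finset.prod_univ_sum, Fintype.piFinset_univ]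
  refine Finset.sum_congr rfl fun σ _ => ?_
  rw [← Real.exp_sum, fld, Finset.mul_sum]

lemma fsys_fld {β : ℝ} (hβ : 0 < β) (hm : ∀ a, 1 ≤ a → a ≤ K → 0 ≤ m a) (j : ℕ) (hj : j ≤ K)
    (y : Fin N → ℝ) : (fsys N β K q m 1 j).L (fld y) = ∑ i, gl β K q m j (y i) := by
  induction j generalizing y with
  | zero => exact lse_fld β y
  | succ j ih =>
    rw [fsys, blk_fld (gl_lip hβ hm j (by omega)) (fun y => ih (by omega) y)
      (hm _ (by omega) (by omega)) _ _ (Finset.nodup_toList _)]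
    simp [gl]

lemma isys_end {β : ℝ} (hβ : 0 < β) (hm : ∀ a, 1 ≤ a → a ≤ K → 0 ≤ m a) (h : ℝ) :
    (isys N β K q m (Real.pi / 2)).L (fld fun _ => h) ≤
      N * (parisiLevelBar K q m K h + Real.log 2 / β) := by
  unfold isys
  rw [Real.cos_pi_div_two, Real.sin_pi_div_two, blk_zero, fsys_fld hβ hm K le_rfl]
  simp only [Finset.sum_const, Finset.card_univ, Fintype.card_fin, nsmul_eq_mul]
  exact mul_le_mul_of_nonneg_left (gl_le hβ hm K le_rfl h) (Nat.cast_nonneg _)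

lemma fsys_zero (β : ℝ) (j : ℕ) (x) :
    (fsys N β K q m 0 j).L x = (lseState (Fin N → Bool) β).L x := by
  induction j with
  | zero => rfl
  | succ j ih => rw [fsys, blk_zero, ih]

end

section Fubini
variable {κ : Type} [Fintype κ] [DecidableEq κ]

lemma mp_update (k : κ) : MeasurePreserving
    (fun p : ℝ × (κ → ℝ) => Function.update p.2 k p.1)
    (stdGauss.prod (Measure.pi fun _ : κ => stdGauss)) (Measure.pi fun _ : κ => stdGauss) := by
  have hmeas : Measurable (fun p : ℝ × (κ → ℝ) => Function.update p.2 k p.1) := by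
    rw [measurable_pi_iff]
    intro i
    by_cases hi : i = k
    · subst hi; simpa using measurable_fst
    · simp only [Function.update_of_ne hi]
      exact (measurable_pi_apply i).comp measurable_snd
  refine ⟨hmeas, (Measure.pi_eq fun s hs => ?_).symm⟩
  rw [Measure.map_apply hmeas (MeasurableSet.univ_pi hs)]
  have : (fun p : ℝ × (κ → ℝ) => Function.update p.2 k p.1) ⁻¹' (Set.univ.pi s) =
      s k ×ˢ Set.univ.pi (Function.update s k Set.univ) := by
    ext p
    simp only [Set.mem_preimage, Set.mem_pi, Set.mem_univ, true_imp_iff, Set.mem_prod]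
    constructor
    · intro h
      refine ⟨by simpa using h k, fun i => ?_⟩
      by_cases hi : i = k
      · subst hi; simp
      · simpa [Function.update_of_ne hi] using h i
    · rintro ⟨h1, h2⟩ i
      by_cases hi : i = k
      · subst hi; simpa using h1
      · simpa [Function.update_of_ne hi] using h2 i
  rw [this, Measure.prod_prod, Measure.pi_pi,
    ← Finset.mul_prod_erase _ (fun i => stdGauss (s i)) (Finset.mem_univ k),
    ← Finset.mul_prod_erase _ (fun i => stdGauss (Function.update s k Set.univ i))
      (Finset.mem_univ k)]
  rw [Function.update_self, measure_univ, one_mul]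
  congr 1
  exact Finset.prod_congr rfl fun i hi => by
    rw [Function.update_of_ne (Finset.ne_of_mem_erase hi)]

variable {ι : Type} [Fintype ι]

lemma int_vec (b : κ → ι → ℝ) (l : List κ) :
    Integrable (fun z : κ → ℝ => (l.map fun k => z k • b k).sum)
      (Measure.pi fun _ : κ => stdGauss) := by
  induction l with
  | nil => simp
  | cons k l ih =>
    simp only [List.map_cons, List.sum_cons]
    refine Integrable.add (Integrable.smul_const ?_ _) ih
    refine integrable_comp_eval (μ := fun _ : κ => stdGauss) (i := k) (f := fun x : ℝ => x) ?_
    refine integrable_of_growth continuous_id 1 1 fun z => ?_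
    simpa using abs_le_exp_abs z

lemma int_L {S : GState ι} (hS : S.Good) (b : κ → ι → ℝ) (l : List κ) (x : ι → ℝ) :
    Integrable (fun z : κ → ℝ => S.L (x + (l.map fun k => z k • b k).sum))
      (Measure.pi fun _ : κ => stdGauss) := by
  have hc := continuous_of_lip hS.lip
  refine Integrable.mono' ((integrable_const |S.L x|).add (int_vec b l).norm) ?_ (ae_of_all _ fun z => ?_)
  · exact hc.comp_aestronglyMeasurable ((int_vec b l).aestronglyMeasurable.const_add x)
  · have := hS.lip (x + (l.map fun k => z k • b k).sum) x
    rw [add_sub_cancel_left] at this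
    have h2 := abs_sub_abs_le_abs_sub (S.L (x + (l.map fun k => z k • b k).sum)) (S.L x)
    rw [Real.norm_eq_abs]
    simp only [Pi.add_apply]
    linarith

lemma blk_int {S : GState ι} (hS : S.Good) (b : κ → ι → ℝ) (l : List κ) (hl : l.Nodup)
    (x : ι → ℝ) : (blk 0 1 b S l).L x =
      ∫ z : κ → ℝ, S.L (x + (l.map fun k => z k • b k).sum) ∂(Measure.pi fun _ : κ => stdGauss) := by
  induction l generalizing x with
  | nil => simp [blk]
  | cons k l ih =>
    have hk := (List.nodup_cons.1 hl).1
    have ih := ih (List.nodup_cons.1 hl).2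
    have h1 : (blk 0 1 b S (k :: l)).L x =
        ∫ w, (blk 0 1 b S l).L (x + w • ((1 : ℝ) • b k)) ∂stdGauss := by
      simp [blk, GState.step, tStep]
    rw [h1]
    have hI := int_L hS b (k :: l) x
    have hmp := mp_update (κ := κ) k
    rw [← hmp.map_eq, integral_map hmp.measurable.aemeasurable
      (by rw [hmp.map_eq]; exact hI.aestronglyMeasurable)]
    have hI2 := hmp.integrable_comp_of_integrable hI
    refine Eq.trans ?_ (integral_prod _ hI2).symm
    congr 1
    ext w
    rw [ih]
    congr 1
    ext z
    simp only [Function.comp_apply]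
    congr 1
    simp only [List.map_cons, List.sum_cons, Function.update_self, one_smul]
    rw [← add_assoc]
    congr 2
    refine List.map_congr_left fun i hi => ?_
    rw [Function.update_of_ne (by rintro rfl; exact hk hi)]

end Fubini

lemma mp_curry (N : ℕ) : MeasurePreserving (MeasurableEquiv.curry (Fin N) (Fin N) ℝ)
    (Measure.pi fun _ : Fin N × Fin N => stdGauss) (gaussC N) := by
  refine ⟨MeasurableEquiv.measurable _, ?_⟩
  have := Measure.infinitePi_map_curry (fun (_ _ : Fin N) => stdGauss)
  simp only [Measure.infinitePi_eq_pi] at this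
  exact this

lemma ham_eq (N : ℕ) (h : ℝ) (z : Fin N × Fin N → ℝ) (σ : Fin N → Bool) :
    hamSK N h (MeasurableEquiv.curry (Fin N) (Fin N) ℝ z) σ =
      -(((fld (fun _ => h) : (Fin N → Bool) → ℝ) + ((Finset.univ : Finset (Fin N × Fin N)).toList.map
        fun k => z k • bSK N k).sum) σ) := by
  rw [Finset.sum_map_toList, Pi.add_apply, Finset.sum_apply, Fintype.sum_prod_type]
  unfold hamSK fld bSK
  simp only [MeasurableEquiv.coe_curry, Function.curry, Pi.smul_apply, smul_eq_mul]
  rw [← Finset.mul_sum, neg_mul, Finset.mul_sum]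
  have : ∀ i j : Fin N, z (i, j) * (if i < j then 1 / Real.sqrt N * (spin (σ i) * spin (σ j)) else 0)
      = 1 / Real.sqrt N * (if i < j then z (i, j) * spin (σ i) * spin (σ j) else 0) := fun i j => by
    split_ifs <;> ring
  simp only [this, ← Finset.mul_sum]
  ring

lemma eq_le (N : ℕ) (hN : 1 ≤ N) (h : ℝ) {β : ℝ} (hβ : 0 < β) (K : ℕ) (q m : ℕ → ℝ) :
    N * eQuenched N h ≤ (isys N β K q m 0).L (fld fun _ => h) := by
  have hN' : (0 : ℝ) < N := by exact_mod_cast hN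
  have hG := lse_good (ι := Fin N → Bool) hβ
  unfold isys
  rw [Real.cos_zero, Real.sin_zero, blk_int (fsys_good hβ K q m 0 K) _ _ (Finset.nodup_toList _)]
  simp only [fsys_zero]
  unfold eQuenched
  rw [← (mp_curry N).integral_comp', ← integral_const_mul]
  set V : (Fin N × Fin N → ℝ) → (Fin N → Bool) → ℝ := fun z =>
    (fld fun _ => h) + ((Finset.univ : Finset (Fin N × Fin N)).toList.map
        fun k => z k • bSK N k).sum with hV
  have hVi : Integrable V (Measure.pi fun _ : Fin N × Fin N => stdGauss) :=
    (integrable_const _).add (int_vec (bSK N) _)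
  have hE : ∀ z, ∃ σ, N * eGS N h (MeasurableEquiv.curry (Fin N) (Fin N) ℝ z) = V z σ := fun z => by
    obtain ⟨σ, hσ⟩ := exists_eq_ciInf_of_finite
      (f := fun σ => hamSK N h (MeasurableEquiv.curry (Fin N) (Fin N) ℝ z) σ)
    refine ⟨σ, ?_⟩
    unfold eGS
    rw [← hσ, ham_eq]
    simp only [hV]
    field_simp
  refine integral_mono ?_ (int_L hG (bSK N) _ _) fun z => ?_
  · refine Integrable.mono' hVi.norm ?_ (ae_of_all _ fun z => ?_)
    · have hm : ∀ σ, AEMeasurable (fun z => hamSK N h (MeasurableEquiv.curry (Fin N) (Fin N) ℝ z) σ)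
          (Measure.pi fun _ : Fin N × Fin N => stdGauss) := fun σ => by
        simp only [ham_eq]
        exact ((measurable_pi_apply σ).comp_aemeasurable hVi.aemeasurable).neg
      unfold eGS
      exact ((((AEMeasurable.iInf hm).const_mul _).neg).const_mul _).aestronglyMeasurable
    · obtain ⟨σ, hσ⟩ := hE z
      rw [hσ]
      exact norm_le_pi_norm (V z) σ
  · obtain ⟨σ, hσ⟩ := hE z
    simp only
    rw [hσ]
    simp only [lseState]
    have : Real.exp (β * V z σ) ≤ ∑ τ, Real.exp (β * V z τ) :=
      Finset.single_le_sum (f := fun τ => Real.exp (β * V z τ))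
        (fun τ _ => (Real.exp_pos _).le) (Finset.mem_univ σ)
    have := Real.log_le_log (Real.exp_pos _) this
    rw [Real.log_exp] at this
    rw [inv_mul_eq_div, le_div_iff₀ hβ, mul_comm]
    exact this

lemma xFun_int {K : ℕ} {q m : ℕ → ℝ} (hq0 : q 0 = 0) (hqK : q K = 1)
    (hq : ∀ a, a < K → q a ≤ q (a + 1)) :
    ∫ r in (0 : ℝ)..1, r * xFun K q m r = 1 / 2 * Tsum K q m K := by
  have hEq : ∀ a, a < K → Set.EqOn (fun r => r * m (a + 1)) (fun r => r * xFun K q m r)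
      (Set.Ioo (q a) (q (a + 1))) := by
    intro a ha r hr
    have h1 : ¬ (1 ≤ r) := by
      have := q_mono_le hq (show a + 1 ≤ K by omega) le_rfl
      rw [hqK] at this
      linarith [hr.2]
    have h2 : sInf {b : ℕ | r < q b} = a + 1 := by
      apply le_antisymm (Nat.sInf_le hr.2)
      refine le_csInf ⟨a + 1, hr.2⟩ fun b hb => ?_
      by_contra hlt
      have := q_mono_le hq (show b ≤ a by omega) ha.le
      have hb' : r < q b := hb
      linarith [hr.1]
    simp only [xFun, if_neg h1, h2]
  have hint : ∀ a, a < K → IntervalIntegrable (fun r => r * xFun K q m r) volume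
      (q a) (q (a + 1)) := fun a ha => by
    refine IntervalIntegrable.congr_uIoo (f := fun r => r * m (a + 1))
      (Continuous.intervalIntegrable (by fun_prop) _ _) ?_
    rw [Set.uIoo_of_le (hq a ha)]
    exact hEq a ha
  have h := intervalIntegral.sum_integral_adjacent_intervals hint
  rw [hq0, hqK] at h
  rw [← h]
  have hT : Tsum K q m K = ∑ a ∈ Finset.range K, m (a + 1) * (q (a + 1) ^ 2 - q a ^ 2) := by
    rw [Tsum, ← Finset.sum_range_reflect]
    refine Finset.sum_congr rfl fun i hi => ?_
    have := Finset.mem_range.1 hi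
    rw [show K - (K - 1 - i) = i + 1 by omega, show i + 1 - 1 = i by omega]
  rw [hT, Finset.mul_sum]
  refine Finset.sum_congr rfl fun a ha => ?_
  have ha := Finset.mem_range.1 ha
  rw [← intervalIntegral.integral_congr_Ioo_of_le (hq a ha) (hEq a ha),
    intervalIntegral.integral_mul_const, integral_id]
  ring

lemma gs_bound (N : ℕ) (hN : 1 ≤ N) (h : ℝ) (X : ZeroTParam) :
    eQuenched N h ≤ gsTrial X.K X.q X.m h := by
  have hN' : (0 : ℝ) < N := by exact_mod_cast hN
  have hm : ∀ a, a < X.K → X.m a ≤ X.m (a + 1) := fun a ha => by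
    rcases Nat.eq_zero_or_pos a with rfl | h0
    · rw [X.hm0]; exact X.hm1
    · exact X.hm_mono a h0 ha
  have hmn : ∀ a, 1 ≤ a → a ≤ X.K → 0 ≤ X.m a := fun a _ ha =>
    X.hm0 ▸ q_mono_le hm (Nat.zero_le a) ha
  have key : ∀ β : ℝ, 0 < β → X.m X.K ≤ β →
      eQuenched N h ≤ gsTrial X.K X.q X.m h + Real.log 2 / β := by
    intro β hβ hmβ
    have h1 := eq_le N hN h hβ X.K X.q X.m
    have h2 := isys_total hN hβ X.hq0 X.hqK X.hq_mono X.hm0 hm hmβ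
      (fld (fun _ => h) : (Fin N → Bool) → ℝ)
    have h3 := isys_end (N := N) (q := X.q) hβ hmn h
    unfold gsTrial
    rw [xFun_int X.hq0 X.hqK X.hq_mono]
    have : N * eQuenched N h ≤ N * (parisiLevelBar X.K X.q X.m X.K h
        - 1 / 2 * (1 / 2 * Tsum X.K X.q X.m X.K) + Real.log 2 / β) := by linarith
    exact le_of_mul_le_mul_left this hN'
  have hlim : Tendsto (fun β : ℝ => gsTrial X.K X.q X.m h + Real.log 2 / β) atTop
      (nhds (gsTrial X.K X.q X.m h + 0)) :=
    (tendsto_const_nhds.div_atTop tendsto_id).const_add _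
  rw [add_zero] at hlim
  refine ge_of_tendsto hlim ?_
  filter_upwards [eventually_gt_atTop 0, eventually_ge_atTop (X.m X.K)] with β h1 h2
  exact key β h1 h2

lemma zeroT_nonempty : Nonempty ZeroTParam :=
  ⟨{ K := 1
     hK := le_rfl
     q := fun a => if a = 0 then 0 else 1
     m := fun _ => 0
     hq0 := by simp
     hqK := by simp
     hq_mono := fun a _ => by by_cases h : a = 0 <;> simp [h]
     hm0 := rfl
     hm1 := le_rfl
     hm_mono := fun _ _ _ => le_rfl }⟩

/-- broken replica bound for the ground state, Theorem `tbound1`: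
for every `N ≥ 1`, `h ∈ ℝ`, and every zero-temperature order parameter `x̄`,
`e_N(h) ≤ α̃(h; x̄) = f̄(0, h; x̄) − (1/2) ∫₀¹ r x̄(r) dr`, and consequently
`e_N(h) ≤ inf_{x̄} α̃(h; x̄)`, uniformly in `N`. -/
theorem ground_state_bound (N : ℕ) (hN : 1 ≤ N) (h : ℝ) :
    (∀ X : ZeroTParam, eQuenched N h ≤ gsTrial X.K X.q X.m h)
    ∧ eQuenched N h ≤ ⨅ X : ZeroTParam, gsTrial X.K X.q X.m h := by
  haveI := zeroT_nonempty
  exact ⟨gs_bound N hN h, le_ciInf (gs_bound N hN h)⟩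

end
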